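/- arXiv:1010.5341 — 2 statements merged into one kernel-verified Lean document; each statement's English description precedes it below -/
import Mathlib

section
/- Let F ∈ ℤ[X_1, X_2] be a polynomial of total degree d ≥ 1 that is irreducible in ℚ[X_1, X_2], and let ε > 0. Let P_1, P_2 be real numbers with P_1, P_2 ≥ 1, and let T be the maximum of P_1^{e_1}·P_2^{e_2} over all pairs of exponents (e_1, e_2) for which the monomial X_1^{e_1}X_2^{e_2} occurs in F with nonzero coefficient; assume T > 1. Then the number N(F; P_1, P_2) of integer points (x_1, x_2) ∈ ℤ² with F(x_1, x_2) = 0, |x_1| ≤ P_1 and |x_2| ≤ P_2 satisfies N(F; P_1, P_2) ≤ C · max{P_1, P_2}^ε · exp( (log P_1 · log P_2)/ log T ) for a constant C depending only on d and ε. -/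
section BPHelpers

open MvPolynomial

lemma bz_card (n : ℕ) : 2 * Nat.card {e : Fin 2 →₀ ℕ | (e.sum fun _ k => k) ≤ n} = (n+1)*(n+2) := by
  have hs : ∀ e : Fin 2 →₀ ℕ, (e.sum fun _ k => k) = e 0 + e 1 := by
    intro e
    rw [Finsupp.sum_fintype _ _ (by simp)]
    simp
  have h1 : {e : Fin 2 →₀ ℕ | (e.sum fun _ k => k) ≤ n} ≃
      (((Finset.range (n+1)).sigma (fun k => Finset.range (k+1)) : Finset (Σ _ : ℕ, ℕ))) := by
    refine ⟨fun e => ⟨⟨e.1 0 + e.1 1, e.1 0⟩, ?_⟩,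
      fun q => ⟨Finsupp.single 0 q.1.2 + Finsupp.single 1 (q.1.1 - q.1.2), ?_⟩, ?_, ?_⟩
    · have := e.2
      simp only [Set.mem_ofPred_eq, hs] at this
      simp; omega
    · have := q.2
      simp only [Finset.mem_sigma, Finset.mem_range] at this
      simp only [Set.mem_ofPred_eq, hs]
      simp; omega
    · intro e
      ext i
      fin_cases i <;> simp
    · rintro ⟨⟨a, b⟩, hq⟩
      simp only [Finset.mem_sigma, Finset.mem_range] at hq
      simp; omega
  rw [Nat.card_congr h1]
  simp only [Nat.card_eq_fintype_card, Fintype.card_coe, Finset.card_sigma, Finset.card_range]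
  clear h1
  induction n with
  | zero => simp
  | succ k ih => rw [Finset.sum_range_succ, mul_add, ih]; ring

lemma bz_finrank (n : ℕ) : 2 * Module.finrank ℚ (restrictTotalDegree (Fin 2) ℚ n) = (n+1)*(n+2) := by
  rw [← bz_card n]
  congr 1
  exact Module.finrank_eq_nat_card_basis (basisRestrictSupport ℚ _)

/-- Lagrange interpolation. -/
lemma bz_interp (Z : Finset (Fin 2 → ℚ)) (z : Fin 2 → ℚ) :
    ∃ L : MvPolynomial (Fin 2) ℚ, L.totalDegree ≤ Z.card ∧ eval z L ≠ 0 ∧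
      ∀ y ∈ Z, y ≠ z → eval y L = 0 := by
  classical
  induction Z using Finset.induction_on with
  | empty => exact ⟨1, by simp, by simp, by simp⟩
  | insert y Z hy ih =>
    obtain ⟨L, h1, h2, h3⟩ := ih
    by_cases hyz : y = z
    · refine ⟨L, h1.trans (Finset.card_le_card (Finset.subset_insert _ _)), h2, ?_⟩
      intro w hw hwz
      rw [Finset.mem_insert] at hw
      rcases hw with rfl | hw
      · exact absurd hyz hwz
      · exact h3 w hw hwz
    · obtain ⟨i, hi⟩ := Function.ne_iff.mp hyz
      refine ⟨L * (X i - C (y i)), ?_, ?_, ?_⟩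
      · rw [Finset.card_insert_of_notMem hy]
        refine (totalDegree_mul _ _).trans (add_le_add h1 ?_)
        refine (totalDegree_sub_C_le _ _).trans ?_
        simp
      · simp only [map_mul, map_sub, eval_X, eval_C]
        exact mul_ne_zero h2 (sub_ne_zero.mpr (Ne.symm hi))
      · intro w hw hwz
        rw [Finset.mem_insert] at hw
        rcases hw with rfl | hw
        · simp
        · simp [h3 w hw hwz]

theorem bezout_rat (F G : MvPolynomial (Fin 2) ℚ) (hF : Irreducible F) (hFG : ¬ F ∣ G)
    (Z : Finset (Fin 2 → ℚ)) (hZ : ∀ z ∈ Z, eval z F = 0 ∧ eval z G = 0) :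
    Z.card ≤ F.totalDegree * G.totalDegree := by
  classical
  set d := F.totalDegree with hd
  set g := G.totalDegree with hg
  set n := Z.card with hn
  have hF0 : F ≠ 0 := hF.ne_zero
  have hFp : Prime F := hF.prime
  let A := restrictTotalDegree (Fin 2) ℚ (g+n)
  let B := restrictTotalDegree (Fin 2) ℚ (d+n)
  let D := restrictTotalDegree (Fin 2) ℚ (d+g+n)
  let N := restrictTotalDegree (Fin 2) ℚ n
  have hA : 2 * Module.finrank ℚ A = _ := bz_finrank (g+n)
  have hB : 2 * Module.finrank ℚ B = _ := bz_finrank (d+n)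
  have hD : 2 * Module.finrank ℚ D = _ := bz_finrank (d+g+n)
  have hN : 2 * Module.finrank ℚ N = _ := bz_finrank n
  let φ0 : (A × B) →ₗ[ℚ] MvPolynomial (Fin 2) ℚ :=
    LinearMap.coprod ((LinearMap.mulRight ℚ F).comp A.subtype) ((LinearMap.mulRight ℚ G).comp B.subtype)
  have hφ0 : ∀ u : A × B, φ0 u = u.1.1 * F + u.2.1 * G := fun u => by simp [φ0]
  have hφD : ∀ u, φ0 u ∈ D := by
    intro u
    rw [hφ0]
    have h1 := (mem_restrictTotalDegree _ _ _).mp u.1.2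
    have h2 := (mem_restrictTotalDegree _ _ _).mp u.2.2
    refine D.add_mem ?_ ?_
    · refine (mem_restrictTotalDegree _ _ _).mpr ((totalDegree_mul _ _).trans ?_)
      omega
    · refine (mem_restrictTotalDegree _ _ _).mpr ((totalDegree_mul _ _).trans ?_)
      omega
  let φ : (A × B) →ₗ[ℚ] D := LinearMap.codRestrict D φ0 hφD
  let ev : D →ₗ[ℚ] (Z → ℚ) := LinearMap.pi fun z => (MvPolynomial.aeval z.1).toLinearMap.comp D.subtype
  have hev : ∀ (p : D) (z : Z), ev p z = eval z.1 p.1 := fun p z => by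
    simp [ev]
  have hsurj : Function.Surjective ev := by
    choose L hL1 hL2 hL3 using fun z => bz_interp Z z
    intro f
    let P : Z → D := fun z => ⟨L z.1, (mem_restrictTotalDegree _ _ _).mpr ((hL1 _).trans (by omega))⟩
    refine ⟨∑ z : Z, (f z / eval z.1 (L z.1)) • P z, ?_⟩
    ext y
    rw [map_sum, Finset.sum_apply, Finset.sum_eq_single y]
    · rw [map_smul, Pi.smul_apply, hev, smul_eq_mul]
      exact div_mul_cancel₀ _ (hL2 _)
    · intro z _ hzy
      rw [map_smul, Pi.smul_apply, hev, smul_eq_mul]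
      change _ * eval y.1 (L z.1) = 0
      rw [hL3 z.1 y.1 y.2 (fun h => hzy (Subtype.ext h.symm)), mul_zero]
    · simp
  have hr1 := LinearMap.finrank_range_add_finrank_ker ev
  have hr1' : Module.finrank ℚ ev.range = n := by
    rw [LinearMap.range_eq_top.mpr hsurj, finrank_top]; simp [hn]
  have hr2 := LinearMap.finrank_range_add_finrank_ker φ
  rw [Module.finrank_prod] at hr2
  have hle : φ.range ≤ ev.ker := by
    rintro _ ⟨u, rfl⟩
    rw [LinearMap.mem_ker]
    ext z
    rw [hev]
    change eval z.1 (φ0 u) = 0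
    rw [hφ0]
    simp [(hZ z.1 z.2).1, (hZ z.1 z.2).2]
  have hr3 := Submodule.finrank_mono hle
  let ψ : N →ₗ[ℚ] (A × B) := LinearMap.prod
    (LinearMap.codRestrict A ((LinearMap.mulRight ℚ (-G)).comp N.subtype) (by
      intro u
      have h1 := (mem_restrictTotalDegree _ _ _).mp u.2
      refine (mem_restrictTotalDegree _ _ _).mpr ((totalDegree_mul _ _).trans ?_)
      rw [totalDegree_neg]
      simp only [Submodule.subtype_apply]
      omega))
    (LinearMap.codRestrict B ((LinearMap.mulRight ℚ F).comp N.subtype) (by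
      intro u
      have h1 := (mem_restrictTotalDegree _ _ _).mp u.2
      refine (mem_restrictTotalDegree _ _ _).mpr ((totalDegree_mul _ _).trans ?_)
      simp only [Submodule.subtype_apply]
      omega))
  have hker : φ.ker ≤ ψ.range := by
    intro u hu
    have hu' : u.1.1 * F + u.2.1 * G = 0 := by
      rw [← hφ0]
      exact congrArg Subtype.val (LinearMap.mem_ker.mp hu)
    have hdv : F ∣ u.2.1 * G := ⟨-u.1.1, by linear_combination hu'⟩
    obtain ⟨W, hW⟩ := (hFp.dvd_or_dvd hdv).resolve_right hFG
    have hWN : W ∈ N := by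
      refine (mem_restrictTotalDegree _ _ _).mpr ?_
      by_cases hW0 : W = 0
      · simp [hW0]
      · have h2 := (mem_restrictTotalDegree _ _ _).mp u.2.2
        rw [hW, totalDegree_mul_of_isDomain hF0 hW0] at h2
        omega
    refine ⟨⟨W, hWN⟩, ?_⟩
    refine Prod.ext (Subtype.ext ?_) (Subtype.ext ?_)
    · change W * (-G) = u.1.1
      apply mul_right_cancel₀ hF0
      rw [hW] at hu'
      linear_combination -hu'
    · change W * F = u.2.1
      rw [hW]; ring
  have hr4 := Submodule.finrank_mono hker
  have hr5 := LinearMap.finrank_range_le ψ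
  have : 2 * n + ((g+n+1)*(g+n+2) + (d+n+1)*(d+n+2)) ≤ (d+g+n+1)*(d+g+n+2) + (n+1)*(n+2) := by
    omega
  nlinarith

theorem bezout_int (F : MvPolynomial (Fin 2) ℤ) (G : MvPolynomial (Fin 2) ℚ)
    (hF : Irreducible (map (Int.castRingHom ℚ) F)) (hFG : ¬ map (Int.castRingHom ℚ) F ∣ G)
    (Z : Finset (Fin 2 → ℤ))
    (hZ : ∀ z ∈ Z, eval z F = 0 ∧ eval (fun i => (z i : ℚ)) G = 0) :
    Z.card ≤ F.totalDegree * G.totalDegree := by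
  classical
  have hinj : Function.Injective (fun (z : Fin 2 → ℤ) => (fun i => (z i : ℚ))) := by
    intro x y h
    ext i
    have : (x i : ℚ) = (y i : ℚ) := congrFun h i
    exact_mod_cast this
  have h := bezout_rat _ G hF hFG (Z.image (fun z i => (z i : ℚ))) ?_
  · rw [Finset.card_image_of_injective _ hinj] at h
    refine h.trans (Nat.mul_le_mul_right _ ?_)
    exact Finset.sup_mono (support_map_subset _ _)
  · intro w hw
    obtain ⟨z, hz, rfl⟩ := Finset.mem_image.mp hw
    refine ⟨?_, (hZ z hz).2⟩
    have := (hZ z hz).1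
    have h2 := MvPolynomial.eval₂_comp_left (Int.castRingHom ℚ) (RingHom.id ℤ) z F
    rw [eval_map]
    rw [← MvPolynomial.eval₂_id] at this
    simp only [this, map_zero, RingHom.comp_id] at h2
    exact h2.symm

lemma bp_taylor (F : MvPolynomial (Fin 2) ℤ) (x y h : ℤ) : ∃ K : ℤ,
    eval ![x, y + h] F = eval ![x, y] F + h * eval ![x, y] (pderiv 1 F) + h ^ 2 * K := by
  induction F using MvPolynomial.induction_on with
  | C a => exact ⟨0, by simp⟩
  | add p q hp hq =>
    obtain ⟨K1, h1⟩ := hp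
    obtain ⟨K2, h2⟩ := hq
    refine ⟨K1 + K2, ?_⟩
    simp only [map_add, h1, h2]; ring
  | mul_X p i hp =>
    obtain ⟨K, hK⟩ := hp
    fin_cases i
    · refine ⟨K * x, ?_⟩
      simp [hK, pderiv_X]; ring
    · refine ⟨eval ![x, y] (pderiv 1 p) + K * y + h * K, ?_⟩
      simp [hK, pderiv_X]; ring

lemma bp_cast_eval (n : ℕ) (F : MvPolynomial (Fin 2) ℤ) (z : Fin 2 → ℤ) :
    ((eval z F : ℤ) : ZMod n) = eval (fun i => (z i : ZMod n)) (map (Int.castRingHom (ZMod n)) F) := by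
  have h2 := MvPolynomial.eval₂_comp_left (Int.castRingHom (ZMod n)) (RingHom.id ℤ) z F
  rw [eval_map]
  rw [← MvPolynomial.eval₂_id]
  simpa [Function.comp_def] using h2

lemma bp_eval_congr (p : ℕ) (F : MvPolynomial (Fin 2) ℤ) (z w : Fin 2 → ℤ)
    (h : ∀ i, (p : ℤ) ∣ z i - w i) : (p : ℤ) ∣ eval z F - eval w F := by
  rw [← ZMod.intCast_zmod_eq_zero_iff_dvd] 
  push_cast
  rw [bp_cast_eval, bp_cast_eval]
  have : (fun i => (z i : ZMod p)) = fun i => (w i : ZMod p) := by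
    ext i
    have := (ZMod.intCast_zmod_eq_zero_iff_dvd _ _).mpr (h i)
    push_cast at this
    exact sub_eq_zero.mp this
  rw [this, sub_self]

lemma bp_hensel (F : MvPolynomial (Fin 2) ℤ) (p : ℕ) (z0 : Fin 2 → ℤ) (c : ℤ)
    (hc : (p : ℤ) ∣ 1 - c * eval z0 (pderiv 1 F)) (k : ℕ) : ∃ f : Polynomial ℤ,
    ∀ z : Fin 2 → ℤ, eval z F = 0 → (∀ i, (p : ℤ) ∣ z i - z0 i) →
      (p : ℤ) ^ (k + 1) ∣ f.eval (z 0) - z 1 := by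
  induction k with
  | zero =>
    refine ⟨Polynomial.C (z0 1), fun z _ hz => ?_⟩
    simpa [dvd_sub_comm] using hz 1
  | succ k ih =>
    obtain ⟨f, hf⟩ := ih
    refine ⟨f - Polynomial.C c * aeval ![Polynomial.X, f] F, fun z hz hzz => ?_⟩
    have h1 := hf z hz hzz
    set h := f.eval (z 0) - z 1 with hh
    have e1 : (aeval ![Polynomial.X, f] F).eval (z 0) = eval ![z 0, f.eval (z 0)] F := by
      have := MvPolynomial.eval₂_comp_left (Polynomial.evalRingHom (z 0)) (algebraMap ℤ (Polynomial ℤ)) ![Polynomial.X, f] F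
      rw [aeval_def, ← Polynomial.coe_evalRingHom, this, ← MvPolynomial.eval₂_id]
      have h7 : (Polynomial.evalRingHom (z 0)).comp (algebraMap ℤ (Polynomial ℤ)) = RingHom.id ℤ :=
        Subsingleton.elim _ _
      rw [h7]
      congr 1
      funext i; fin_cases i <;> simp
    obtain ⟨K, hK⟩ := bp_taylor F (z 0) (z 1) h
    have e2 : z 1 + h = f.eval (z 0) := by rw [hh]; ring
    have e3 : ![z 0, z 1] = z := by ext i; fin_cases i <;> simp
    rw [e2, e3, hz] at hK
    have h2 := bp_eval_congr p (pderiv 1 F) z z0 hzz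
    obtain ⟨q, hq⟩ := h1
    rw [Polynomial.eval_sub, Polynomial.eval_mul, Polynomial.eval_C, e1, hK]
    have h3 : (p : ℤ) ∣ 1 - c * eval z (pderiv 1 F) - c * h * K := by
      obtain ⟨a, ha⟩ := hc
      obtain ⟨b, hb⟩ := h2
      refine ⟨a - c * b - c * p ^ k * q * K, ?_⟩
      rw [hq]
      linear_combination ha - c * hb
    obtain ⟨r, hr⟩ := h3
    refine ⟨q * r, ?_⟩
    have : Polynomial.eval (z 0) f - c * (0 + h * eval z (pderiv 1 F) + h ^ 2 * K) - z 1
      = h * (1 - c * eval z (pderiv 1 F) - c * h * K) := by rw [hh]; ring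
    rw [this, hr, hq]; ring

lemma bp_det_poly (s p : ℕ) (g : Fin s → Polynomial ℤ) (t : Fin s → ℤ)
    (ht : ∀ i j, (p : ℤ) ∣ t i - t j) :
    (p : ℤ) ^ (s * (s - 1) / 2) ∣ (Matrix.of fun i j => (g j).eval (t i)).det := by
  classical
  let Ω : Polynomial ℤ := ∏ i, (Polynomial.X - Polynomial.C (t i))
  have hΩm : Ω.Monic := Polynomial.monic_prod_of_monic _ _ (fun i _ => Polynomial.monic_X_sub_C _)
  have hΩd : Ω.degree = s := by
    rw [Polynomial.degree_prod]; simp only [Polynomial.degree_X_sub_C]; simp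
  let r : Fin s → Polynomial ℤ := fun j => g j %ₘ Ω
  have hr : ∀ i j, (g j).eval (t i) = ∑ k : Fin s, t i ^ (k : ℕ) * (r j).coeff k := by
    intro i j
    have h0 : Ω.eval (t i) = 0 := by
      rw [Polynomial.eval_prod]
      exact Finset.prod_eq_zero (Finset.mem_univ i) (by simp)
    have h1 : (g j).eval (t i) = (r j).eval (t i) := by
      conv_lhs => rw [← Polynomial.modByMonic_add_div (g j) Ω]
      simp [h0, r]
    have h2 : (r j).natDegree < s ∨ r j = 0 := by
      by_cases h : r j = 0
      · exact Or.inr h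
      · left
        have := Polynomial.degree_modByMonic_lt (g j) hΩm
        rw [hΩd] at this
        exact (Polynomial.natDegree_lt_iff_degree_lt h).mpr this
    rw [h1]
    rcases h2 with h2 | h2
    · rw [Polynomial.eval_eq_sum_range' h2, Finset.sum_range]
      exact Finset.sum_congr rfl fun k _ => mul_comm _ _
    · simp [h2]
  have hM : (Matrix.of fun i j => (g j).eval (t i)) =
      Matrix.vandermonde t * (Matrix.of fun k j => (r j).coeff (k : Fin s)) := by
    ext i j
    simp [Matrix.mul_apply, hr, Matrix.vandermonde_apply]
  rw [hM, Matrix.det_mul]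
  apply Dvd.dvd.mul_right
  rw [Matrix.det_vandermonde]
  have : (p : ℤ) ^ (s * (s - 1) / 2) = ∏ i : Fin s, ∏ j ∈ Finset.Ioi i, (p : ℤ) := by
    simp only [Finset.prod_const, Finset.prod_pow_eq_pow_sum]
    congr 1
    simp only [Fin.card_Ioi]
    rw [← Finset.sum_range_id, ← Finset.sum_range_reflect, Finset.sum_range]
  rw [this]
  exact Finset.prod_dvd_prod_of_dvd _ _ fun i _ => Finset.prod_dvd_prod_of_dvd _ _ fun j _ => ht j i

lemma bp_det_points (F : MvPolynomial (Fin 2) ℤ) (p : ℕ) (z0 : Fin 2 → ℤ) (c : ℤ)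
    (hc : (p : ℤ) ∣ 1 - c * eval z0 (pderiv 1 F)) (s : ℕ) (e : Fin s → ℕ × ℕ)
    (z : Fin s → Fin 2 → ℤ) (hz : ∀ i, eval (z i) F = 0) (hzz : ∀ i j, (p : ℤ) ∣ z i j - z0 j) :
    (p : ℤ) ^ (s * (s - 1) / 2) ∣
      (Matrix.of fun i j => z i 0 ^ (e j).1 * z i 1 ^ (e j).2).det := by
  set k := s * (s - 1) / 2
  obtain ⟨f, hf⟩ := bp_hensel F p z0 c hc k
  have h1 := bp_det_poly s p (fun j => Polynomial.X ^ (e j).1 * f ^ (e j).2) (fun i => z i 0)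
    (fun i j => by have := dvd_sub (hzz i 0) (hzz j 0); simpa using this)
  have h2 : (((p ^ k : ℕ) : ℤ)) ∣ (Matrix.of fun i j => z i 0 ^ (e j).1 * z i 1 ^ (e j).2).det := by
    rw [← ZMod.intCast_zmod_eq_zero_iff_dvd]
    have h1' := h1
    rw [← Nat.cast_pow] at h1'
    rw [← ZMod.intCast_zmod_eq_zero_iff_dvd] at h1'
    rw [← h1', ← eq_intCast (Int.castRingHom _), ← eq_intCast (Int.castRingHom _),
      RingHom.map_det, RingHom.map_det]
    congr 1
    ext i j
    have h3 := hf (z i) (hz i) (hzz i)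
    have h4 : ((p ^ k : ℕ) : ℤ) ∣ f.eval (z i 0) - z i 1 := by
      push_cast
      exact (pow_dvd_pow _ (Nat.le_succ k)).trans h3
    rw [← ZMod.intCast_zmod_eq_zero_iff_dvd] at h4
    push_cast at h4
    have h5 := sub_eq_zero.mp h4
    simp [← h5]
  exact_mod_cast h2

lemma bp_rank {α : Type*} (Z : Finset α) (s : ℕ) (v : α → Fin s → ℚ)
    (h : ∀ z : Fin s → α, (∀ i, z i ∈ Z) → (Matrix.of fun i j => v (z i) j).det = 0) :
    ∃ c : Fin s → ℚ, c ≠ 0 ∧ ∀ z ∈ Z, ∑ j, c j * v z j = 0 := by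
  classical
  by_cases hW : Submodule.span ℚ (v '' Z) = ⊤
  · exfalso
    obtain ⟨b, hb1, hb2, hb3⟩ := exists_linearIndependent ℚ (v '' (Z : Set α))
    rw [hW] at hb2
    have hbf : b.Finite := (Z.finite_toSet.image v).subset hb1
    have := hbf.fintype
    let B := Module.Basis.mk hb3 (by rw [Subtype.range_coe, hb2])
    have hcard : Fintype.card b = s := by
      rw [← Module.finrank_eq_card_basis B]; simp
    let eq : Fin s ≃ b := (Fintype.equivFinOfCardEq hcard).symm
    have hch : ∀ i : Fin s, ∃ a ∈ Z, v a = (eq i).1 := fun i => by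
      obtain ⟨a, ha, hav⟩ := hb1 (eq i).2
      exact ⟨a, ha, hav⟩
    choose z hzZ hzv using hch
    have hdet := h z hzZ
    have hli : LinearIndependent ℚ (Matrix.of fun i j => v (z i) j).row := by
      have : (Matrix.of fun i j => v (z i) j).row = (Subtype.val : b → _) ∘ eq := by
        ext i j
        simp [Matrix.row, hzv]
      rw [this]
      exact hb3.comp _ eq.injective
    have hu := Matrix.linearIndependent_rows_iff_isUnit.mp hli
    rw [Matrix.isUnit_iff_isUnit_det, hdet] at hu
    exact not_isUnit_zero hu
  · obtain ⟨f, hf0, hf⟩ := Submodule.exists_le_ker_of_lt_top _ (lt_top_iff_ne_top.mpr hW)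
    have hfv : ∀ w : Fin s → ℚ, f w = ∑ j, f (Pi.single j 1) * w j := by
      intro w
      conv_lhs => rw [pi_eq_sum_univ' w]
      simp [map_sum, mul_comm]
    refine ⟨fun j => f (Pi.single j 1), ?_, ?_⟩
    · intro h0
      apply hf0
      ext w
      have := congrFun h0 w
      simpa using this
    · intro z hz
      rw [← hfv]
      exact hf (Submodule.subset_span ⟨z, hz, rfl⟩)

/-- determinant bound -/
lemma bp_det_bound (s : ℕ) (M : Matrix (Fin s) (Fin s) ℤ) (w : Fin s → ℝ)
    (h : ∀ i j, |(M i j : ℝ)| ≤ w j) : |(M.det : ℝ)| ≤ s.factorial * ∏ j, w j := by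
  rw [← Matrix.det_transpose, Matrix.det_apply]
  push_cast
  refine (Finset.abs_sum_le_sum_abs _ _).trans ?_
  have : ∀ σ ∈ (Finset.univ : Finset (Equiv.Perm (Fin s))),
      |((Equiv.Perm.sign σ • ∏ i, M.transpose (σ i) i : ℤ) : ℝ)| ≤ ∏ j, w j := by
    intro σ _
    rw [Units.smul_def, smul_eq_mul]
    push_cast
    rw [abs_mul]
    have h1 : |(((Equiv.Perm.sign σ : ℤˣ) : ℤ) : ℝ)| = 1 := by
      rcases Int.units_eq_one_or (Equiv.Perm.sign σ) with h | h <;> simp [h]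
    rw [h1, one_mul, Finset.abs_prod, ← Equiv.prod_comp σ w]
    exact Finset.prod_le_prod (fun _ _ => abs_nonneg _) fun i _ => h _ _
  refine (Finset.sum_le_card_nsmul _ _ _ this).trans ?_
  simp [Fintype.card_perm]

/-- exponent vector of a pair -/
noncomputable def bpe (q : ℕ × ℕ) : Fin 2 →₀ ℕ := Finsupp.single 0 q.1 + Finsupp.single 1 q.2

@[simp] lemma bpe_zero (q : ℕ × ℕ) : bpe q 0 = q.1 := by simp [bpe]
@[simp] lemma bpe_one (q : ℕ × ℕ) : bpe q 1 = q.2 := by simp [bpe]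

lemma bpe_inj : Function.Injective bpe := by
  intro q r h
  have h0 := DFunLike.congr_fun h 0
  have h1 := DFunLike.congr_fun h 1
  simp at h0 h1
  exact Prod.ext h0 h1

lemma bpe_surj (e : Fin 2 →₀ ℕ) : bpe (e 0, e 1) = e := by
  ext i
  fin_cases i <;> simp

lemma bp_eval_mono {R : Type*} [CommRing R] (q : ℕ × ℕ) (c : R) (z : Fin 2 → R) :
    eval z (monomial (bpe q) c) = c * (z 0 ^ q.1 * z 1 ^ q.2) := by
  rw [eval_monomial, Finsupp.prod_fintype _ _ (by simp)]
  simp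

lemma bp_aux (F : MvPolynomial (Fin 2) ℤ) (p : ℕ) (z0 : Fin 2 → ℤ) (c : ℤ)
    (hc : (p : ℤ) ∣ 1 - c * eval z0 (pderiv 1 F)) (E : Finset (ℕ × ℕ)) (P : Fin 2 → ℝ)
    (hE : (E.card.factorial : ℝ) * ∏ q ∈ E, (P 0 ^ q.1 * P 1 ^ q.2)
      < (p : ℝ) ^ (E.card * (E.card - 1) / 2))
    (Z : Finset (Fin 2 → ℤ)) (hZF : ∀ z ∈ Z, eval z F = 0)
    (hZ0 : ∀ z ∈ Z, ∀ i, (p : ℤ) ∣ z i - z0 i)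
    (hZP : ∀ z ∈ Z, ∀ i, |(z i : ℝ)| ≤ P i) :
    ∃ G : MvPolynomial (Fin 2) ℚ, G ≠ 0 ∧ (∀ e ∈ G.support, (e 0, e 1) ∈ E) ∧
      ∀ z ∈ Z, eval (fun i => (z i : ℚ)) G = 0 := by
  classical
  set s := E.card with hs
  let en : Fin s ≃ E := E.equivFin.symm
  have hdet : ∀ z : Fin s → Fin 2 → ℤ, (∀ i, z i ∈ Z) →
      (Matrix.of fun i j => z i 0 ^ (en j).1.1 * z i 1 ^ (en j).1.2).det = 0 := by
    intro z hz
    have h1 := bp_det_points F p z0 c hc s (fun j => (en j).1) z (fun i => hZF _ (hz i))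
      (fun i j => hZ0 _ (hz i) j)
    have h2 := bp_det_bound s (Matrix.of fun i j => z i 0 ^ (en j).1.1 * z i 1 ^ (en j).1.2)
      (fun j => P 0 ^ (en j).1.1 * P 1 ^ (en j).1.2) (by
        intro i j
        have g0 := hZP _ (hz i) 0
        have g1 := hZP _ (hz i) 1
        simp only [Matrix.of_apply]
        push_cast
        rw [abs_mul, abs_pow, abs_pow]
        exact mul_le_mul (pow_le_pow_left₀ (abs_nonneg _) g0 _) (pow_le_pow_left₀ (abs_nonneg _) g1 _)
          (by positivity) (pow_nonneg ((abs_nonneg _).trans g0) _))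
    have h3 : ∏ j : Fin s, (P 0 ^ (en j).1.1 * P 1 ^ (en j).1.2)
        = ∏ q ∈ E, (P 0 ^ q.1 * P 1 ^ q.2) := by
      rw [Equiv.prod_comp en (fun q : E => P 0 ^ q.1.1 * P 1 ^ q.1.2)]
      exact Finset.prod_coe_sort E (fun q => P 0 ^ q.1 * P 1 ^ q.2)
    rw [h3] at h2
    by_contra hne
    have h4 := Int.le_of_dvd (abs_pos.mpr hne) ((dvd_abs _ _).mpr h1)
    have h5 : (p : ℝ) ^ (s * (s - 1) / 2) ≤
      |((Matrix.of fun i j => z i 0 ^ (en j).1.1 * z i 1 ^ (en j).1.2).det : ℝ)| := by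
        exact_mod_cast h4
    linarith
  obtain ⟨k, hk0, hk⟩ := bp_rank Z s (fun z j => (z 0 : ℚ) ^ (en j).1.1 * (z 1 : ℚ) ^ (en j).1.2) (by
    intro z hz
    have h1 := congrArg (Int.castRingHom ℚ) (hdet z hz)
    rw [RingHom.map_det] at h1
    rw [map_zero] at h1
    rw [← h1]
    congr 1
    ext i j
    simp)
  have hco : ∀ e, coeff e (∑ j : Fin s, monomial (bpe (en j).1) (k j))
      = ∑ j : Fin s, if bpe (en j).1 = e then k j else 0 := by
    intro e
    rw [coeff_sum]
    exact Finset.sum_congr rfl fun j _ => coeff_monomial _ _ _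
  refine ⟨∑ j : Fin s, monomial (bpe (en j).1) (k j), ?_, ?_, ?_⟩
  · obtain ⟨j, hj⟩ := Function.ne_iff.mp hk0
    intro h0
    have h1 := hco (bpe (en j).1)
    rw [h0, coeff_zero, Finset.sum_eq_single j] at h1
    · simp at h1
      exact hj h1.symm
    · intro i _ hij
      rw [if_neg]
      intro h
      exact hij (en.injective (Subtype.ext (bpe_inj h)))
    · simp
  · intro e he
    rw [mem_support_iff, hco] at he
    obtain ⟨j, _, hj⟩ := Finset.exists_ne_zero_of_sum_ne_zero he
    have h1 : bpe (en j).1 = e := by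
      by_contra h
      simp [h] at hj
    rw [← h1]
    simp
  · intro z hz
    rw [map_sum, ← hk z hz]
    exact Finset.sum_congr rfl fun j _ => bp_eval_mono _ _ _

/-- weighted degree -/
noncomputable def bpw (a b : ℝ) (e : Fin 2 →₀ ℕ) : ℝ ×ₗ ℕ := toLex (e 0 * a + e 1 * b, e 0)

lemma bpw_add (a b : ℝ) (e f : Fin 2 →₀ ℕ) : bpw a b (e + f) = bpw a b e + bpw a b f := by
  simp only [bpw, Finsupp.add_apply, ← toLex_add, Prod.mk_add_mk]
  congr 2
  push_cast; ring

lemma bpw_inj (a b : ℝ) (hb : 0 < b) : Function.Injective (bpw a b) := by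
  intro e f h
  have h' := toLex_inj.mp h
  have h1 := congrArg Prod.fst h'
  have h2 := congrArg Prod.snd h'
  simp only at h1 h2
  rw [h2] at h1
  have h3 : (e 1 : ℝ) = f 1 := mul_right_cancel₀ hb.ne' (by linarith)
  ext i
  fin_cases i
  · exact h2
  · exact_mod_cast h3

lemma bp_lead (F G : MvPolynomial (Fin 2) ℚ) (a b : ℝ) (hb : 0 < b) (hG : G ≠ 0) (hFG : F ∣ G)
    (m : Fin 2 →₀ ℕ) (hm : m ∈ F.support) (hmax : ∀ e ∈ F.support, bpw a b e ≤ bpw a b m) :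
    ∃ e ∈ G.support, m ≤ e := by
  classical
  obtain ⟨H, rfl⟩ := hFG
  have hH : H ≠ 0 := right_ne_zero_of_mul hG
  obtain ⟨n, hn, hnmax⟩ := Finset.exists_max_image H.support (bpw a b) (support_nonempty.mpr hH)
  refine ⟨m + n, ?_, le_self_add⟩
  rw [mem_support_iff, coeff_mul, Finset.sum_eq_single (m, n)]
  · exact mul_ne_zero (mem_support_iff.mp hm) (mem_support_iff.mp hn)
  · rintro ⟨x, y⟩ hxy hne
    rw [Finset.HasAntidiagonal.mem_antidiagonal] at hxy
    simp only at hxy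
    by_contra h0
    have hx := hmax x (mem_support_iff.mpr (left_ne_zero_of_mul h0))
    have hy := hnmax y (mem_support_iff.mpr (right_ne_zero_of_mul h0))
    have h1 : bpw a b x + bpw a b y = bpw a b m + bpw a b n := by rw [← bpw_add, ← bpw_add, hxy]
    have hx' : bpw a b x = bpw a b m := by
      refine le_antisymm hx ?_
      by_contra hlt
      have := add_lt_add_of_lt_of_le (not_le.mp hlt) hy
      exact absurd h1 this.ne
    have hxm := bpw_inj a b hb hx'
    rw [hxm] at hxy
    exact hne (Prod.ext hxm (add_left_cancel hxy))
  · intro h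
    exfalso; apply h; rw [Finset.HasAntidiagonal.mem_antidiagonal]

lemma bp_count_mod (F : MvPolynomial (Fin 2) ℤ) (d : ℕ) (hd : F.totalDegree ≤ d) (p : ℕ) (hp : p.Prime)
    (B : ℕ) (Z : Finset (Fin 2 → ℤ)) (hZF : ∀ z ∈ Z, eval z F = 0)
    (hZD : ∀ z ∈ Z, ¬ (p : ℤ) ∣ eval z (pderiv 1 F))
    (hB : ∀ z0 ∈ Z, ∀ Y ⊆ Z, (∀ z ∈ Y, ∀ i, (p : ℤ) ∣ z i - z0 i) → Y.card ≤ B) :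
    Z.card ≤ B * (d * p) := by
  classical
  have : Fact p.Prime := ⟨hp⟩
  rcases Z.eq_empty_or_nonempty with rfl | ⟨z1, hz1⟩
  · simp
  let r : (Fin 2 → ℤ) → (Fin 2 → ZMod p) := fun z i => (z i : ZMod p)
  have hF0 : map (Int.castRingHom (ZMod p)) F ≠ 0 := by
    intro h0
    apply hZD z1 hz1
    rw [← ZMod.intCast_zmod_eq_zero_iff_dvd, bp_cast_eval, ← pderiv_map, h0]
    simp
  have h1 : Z.card ≤ B * (Z.image r).card := by
    apply Finset.card_le_mul_card_image
    intro y hy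
    obtain ⟨z0, hz0, rfl⟩ := Finset.mem_image.mp hy
    refine hB z0 hz0 _ (Finset.filter_subset _ _) ?_
    intro z hz i
    have := congrFun (Finset.mem_filter.mp hz).2 i
    rw [← ZMod.intCast_zmod_eq_zero_iff_dvd]
    push_cast
    exact sub_eq_zero.mpr this
  refine h1.trans (Nat.mul_le_mul_left _ ?_)
  have h2 := schwartz_zippel_totalDegree hF0 (Finset.univ : Finset (ZMod p))
  have h3 : Z.image r ⊆ {f ∈ Fintype.piFinset fun _ : Fin 2 => (Finset.univ : Finset (ZMod p)) |
      eval f (map (Int.castRingHom (ZMod p)) F) = 0} := by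
    intro y hy
    obtain ⟨z0, hz0, rfl⟩ := Finset.mem_image.mp hy
    simp only [Finset.mem_filter, Fintype.mem_piFinset, Finset.mem_univ, implies_true, true_and]
    rw [← bp_cast_eval, hZF z0 hz0, Int.cast_zero]
  have h4 := Finset.card_le_card h3
  refine h4.trans ?_
  rw [Finset.card_univ, ZMod.card] at h2
  have hp0 : (0 : ℚ≥0) < p := by exact_mod_cast hp.pos
  rw [div_le_div_iff₀ (by positivity) hp0] at h2
  have h5 : (map (Int.castRingHom (ZMod p)) F).totalDegree ≤ d :=
    (Finset.sup_mono (support_map_subset _ _)).trans hd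
  have h6 : (Finset.card {f ∈ Fintype.piFinset fun _ : Fin 2 => (Finset.univ : Finset (ZMod p)) |
      eval f (map (Int.castRingHom (ZMod p)) F) = 0}) * p ≤ (d * p) * p := by
    have : (Finset.card {f ∈ Fintype.piFinset fun _ : Fin 2 => (Finset.univ : Finset (ZMod p)) |
      eval f (map (Int.castRingHom (ZMod p)) F) = 0}) * p ≤
        (map (Int.castRingHom (ZMod p)) F).totalDegree * p ^ 2 := by exact_mod_cast h2
    refine this.trans ?_
    rw [mul_assoc, ← sq]
    exact Nat.mul_le_mul_right _ h5
  exact Nat.le_of_mul_le_mul_right h6 hp.pos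

lemma bp_primes (n : ℕ) (hn : n ≠ 0) (k : ℕ) : ∃ S : Finset ℕ, S.card = k ∧
    ∀ p ∈ S, p.Prime ∧ n < p ∧ p ≤ 2 ^ k * n := by
  classical
  induction k with
  | zero => exact ⟨∅, by simp, by simp⟩
  | succ k ih =>
    obtain ⟨S, h1, h2⟩ := ih
    obtain ⟨p, hp, hp1, hp2⟩ := Nat.exists_prime_lt_and_le_two_mul (2 ^ k * n) (by positivity)
    have hpS : p ∉ S := fun h => absurd (h2 p h).2.2 (by omega)
    refine ⟨insert p S, by rw [Finset.card_insert_of_notMem hpS, h1], ?_⟩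
    intro q hq
    have h3 : n ≤ 2 ^ k * n := Nat.le_mul_of_pos_left _ (by positivity)
    rcases Finset.mem_insert.mp hq with rfl | hq
    · refine ⟨hp, by omega, ?_⟩
      rw [pow_succ]; linarith
    · obtain ⟨a, b, c⟩ := h2 q hq
      refine ⟨a, b, ?_⟩
      rw [pow_succ]; linarith

lemma bp_siegel {α β : Type*} [Fintype α] [Fintype β] (A : Matrix α β ℤ) (R : ℝ) (hR : 1 ≤ R)
    (hA : ∀ i j, |(A i j : ℝ)| ≤ R) (r : ℕ) (hr : Fintype.card β ≤ r)
    (hn : Fintype.card α < Fintype.card β) (hm : 0 < Fintype.card α) :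
    ∃ t : β → ℤ, t ≠ 0 ∧ (∀ i, ∑ j, A i j * t j = 0) ∧ ∀ j, |(t j : ℝ)| ≤ (r * R) ^ r := by
  obtain ⟨t, h1, h2, h3⟩ := Int.Matrix.exists_ne_zero_int_vec_norm_le A hn hm
  refine ⟨t, h1, fun i => congrFun h2 i, fun j => ?_⟩
  have hj : |(t j : ℝ)| ≤ ‖t‖ := by
    have := norm_le_pi_norm t j
    rwa [Int.norm_eq_abs] at this
  refine hj.trans (h3.trans ?_)
  have hAn : max 1 (@norm _ Matrix.seminormedAddCommGroup.toNorm A) ≤ R := by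
    refine max_le hR ?_
    rw [Matrix.norm_le_iff (by linarith)]
    intro i j
    rw [Int.norm_eq_abs]
    exact hA i j
  have hb : (Fintype.card β : ℝ) * max 1 (@norm _ Matrix.seminormedAddCommGroup.toNorm A) ≤ r * R := by
    refine mul_le_mul (by exact_mod_cast hr) hAn (by positivity) (by positivity)
  have hr1 : (1 : ℝ) ≤ r * R := by
    have : (1 : ℝ) ≤ r := by exact_mod_cast (by omega : 1 ≤ r)
    nlinarith
  have hpos : (1 : ℝ) ≤ (Fintype.card β : ℝ) - Fintype.card α := by
    have : (Fintype.card α : ℝ) + 1 ≤ Fintype.card β := by exact_mod_cast hn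
    linarith
  refine (Real.rpow_le_rpow (by positivity) hb (by positivity)).trans ?_
  rw [← Real.rpow_natCast]
  refine Real.rpow_le_rpow_of_exponent_le hr1 ?_
  rw [div_le_iff₀ (by linarith)]
  have h5 : (Fintype.card α : ℝ) ≤ r := by exact_mod_cast (by omega : Fintype.card α ≤ r)
  nlinarith

lemma bp_small (d : ℕ) (F : MvPolynomial (Fin 2) ℤ) (hd : F.totalDegree = d)
    (hF : Irreducible (map (Int.castRingHom ℚ) F)) (P : ℝ) (hP : 1 ≤ P)
    (Z : Finset (Fin 2 → ℤ)) (hZF : ∀ z ∈ Z, eval z F = 0)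
    (hZP : ∀ z ∈ Z, ∀ i, |(z i : ℝ)| ≤ P) :
    Z.card ≤ d * d ∨ ∃ (F' : MvPolynomial (Fin 2) ℤ) (c : ℚ), c ≠ 0 ∧
      map (Int.castRingHom ℚ) F' = C c * map (Int.castRingHom ℚ) F ∧
      (∀ e ∈ F'.support, e 0 + e 1 ≤ d) ∧
      ∀ e, |((coeff e F' : ℤ) : ℝ)| ≤ (((d + 1) ^ 2 : ℕ) * P ^ d) ^ ((d + 1) ^ 2) := by
  classical
  have hdegsum : ∀ e : Fin 2 →₀ ℕ, (e.sum fun _ k => k) = e 0 + e 1 := by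
    intro e
    rw [Finsupp.sum_fintype _ _ (by simp)]
    simp
  rcases Z.eq_empty_or_nonempty with rfl | ⟨z1, hz1⟩
  · left; simp
  let E : Finset (ℕ × ℕ) := (Finset.range (d+1) ×ˢ Finset.range (d+1)).filter (fun q => q.1 + q.2 ≤ d)
  have hEm : ∀ q : ℕ × ℕ, q ∈ E ↔ q.1 + q.2 ≤ d := by
    intro q; simp [E]; omega
  have hEc : Fintype.card E ≤ (d+1)^2 := by
    rw [Fintype.card_coe]
    refine (Finset.card_filter_le _ _).trans ?_
    simp [sq]
  let v : (Fin 2 → ℤ) → E → ℚ := fun z q => (z 0 : ℚ) ^ q.1.1 * (z 1 : ℚ) ^ q.1.2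
  obtain ⟨κ, a, ha, hsp, hli⟩ := exists_linearIndependent' ℚ (fun z : Z => v z.1)
  have : Fintype κ := Fintype.ofInjective a ha
  have hFE : ∀ e ∈ F.support, (e 0, e 1) ∈ E := by
    intro e he
    rw [hEm, ← hdegsum, ← hd]
    exact le_totalDegree he
  have hF0 : F ≠ 0 := by
    rintro rfl
    simp at hF
  -- the functional given by F
  let lam : (E → ℚ) →ₗ[ℚ] ℚ := ∑ q : E, ((coeff (bpe q.1) F : ℤ) : ℚ) • LinearMap.proj q
  have hlam : ∀ w, lam w = ∑ q : E, ((coeff (bpe q.1) F : ℤ) : ℚ) * w q := by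
    intro w; simp [lam]
  have hsum : ∀ (H : MvPolynomial (Fin 2) ℤ) (hH : ∀ e ∈ H.support, (e 0, e 1) ∈ E) (z : Fin 2 → ℤ),
      eval z H = ∑ q : E, coeff (bpe q.1) H * (z 0 ^ q.1.1 * z 1 ^ q.1.2) := by
    intro H hH z
    have h1 : H = ∑ q : E, monomial (bpe q.1) (coeff (bpe q.1) H) := by
      rw [Finset.sum_coe_sort E (fun q => monomial (bpe q) (coeff (bpe q) H))]
      conv_lhs => rw [as_sum H]
      refine Finset.sum_bij_ne_zero (fun e _ _ => (e 0, e 1)) (fun e he _ => hH e he) ?_ ?_ ?_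
      · intro e _ _ f _ _ h
        rw [← bpe_surj e, h, bpe_surj]
      · intro q _ hq
        refine ⟨bpe q, ?_, ?_, by simp⟩
        · rw [mem_support_iff]; intro h; simp [h] at hq
        · simpa using hq
      · intro e _ _
        rw [bpe_surj]
    conv_lhs => rw [h1]
    rw [map_sum]
    exact Finset.sum_congr rfl fun q _ => bp_eval_mono _ _ _
  have hlamv : ∀ z ∈ Z, lam (v z) = 0 := by
    intro z hz
    rw [hlam]
    have := hsum F hFE z
    rw [hZF z hz] at this
    have h2 := congrArg (Int.cast : ℤ → ℚ) this
    push_cast at h2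
    exact h2.symm
  have hcard : Fintype.card κ < Fintype.card E := by
    have h1 := finrank_span_eq_card hli
    rw [← h1]
    have h2 : Module.finrank ℚ (E → ℚ) = Fintype.card E := by simp
    rw [← h2]
    apply Submodule.finrank_lt
    intro htop
    obtain ⟨e, he⟩ := support_nonempty.mpr hF0
    have h3 : lam (Pi.single ⟨(e 0, e 1), hFE e he⟩ 1) = 0 := by
      have h4 : Submodule.span ℚ (Set.range ((fun z : Z => v z.1) ∘ a)) ≤ lam.ker := by
        rw [Submodule.span_le]
        rintro _ ⟨k, rfl⟩
        exact hlamv _ (a k).2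
      rw [htop] at h4
      exact h4 trivial
    rw [hlam, Finset.sum_eq_single ⟨(e 0, e 1), hFE e he⟩] at h3
    · simp only [Pi.single_eq_same, mul_one, bpe_surj] at h3
      exact (mem_support_iff.mp he) (by exact_mod_cast h3)
    · intro b _ hb
      rw [Pi.single_eq_of_ne hb, mul_zero]
    · simp
  have hpos : 0 < Fintype.card κ := by
    rw [Fintype.card_pos_iff]
    by_contra hne
    rw [not_nonempty_iff] at hne
    have h1 : v z1 ∈ Submodule.span ℚ (Set.range ((fun z : Z => v z.1) ∘ a)) := by
      rw [hsp]; exact Submodule.subset_span ⟨⟨z1, hz1⟩, rfl⟩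
    rw [Set.range_eq_empty, Submodule.span_empty, Submodule.mem_bot] at h1
    have h2 := congrFun h1 ⟨(0, 0), by simp [hEm]⟩
    simp [v] at h2
  obtain ⟨t, ht0, ht1, ht2⟩ := bp_siegel
    (Matrix.of fun (k : κ) (q : E) => (a k).1 0 ^ q.1.1 * (a k).1 1 ^ q.1.2) (P ^ d)
    (one_le_pow₀ hP) (by
      intro k q
      have g0 := hZP _ (a k).2 0
      have g1 := hZP _ (a k).2 1
      simp only [Matrix.of_apply]
      push_cast
      rw [abs_mul, abs_pow, abs_pow]
      have h1 : |((a k).1 0 : ℝ)| ^ q.1.1 * |((a k).1 1 : ℝ)| ^ q.1.2 ≤ P ^ q.1.1 * P ^ q.1.2 := by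
        gcongr
      refine h1.trans ?_
      rw [← pow_add]
      exact pow_le_pow_right₀ hP ((hEm _).mp q.2)) ((d+1)^2) hEc hcard hpos
  let F' : MvPolynomial (Fin 2) ℤ := ∑ q : E, monomial (bpe q.1) (t q)
  have hco : ∀ e, coeff e F' = ∑ q : E, if bpe q.1 = e then t q else 0 := by
    intro e
    rw [coeff_sum]
    exact Finset.sum_congr rfl fun j _ => coeff_monomial _ _ _
  have hco' : ∀ q : E, coeff (bpe q.1) F' = t q := by
    intro q
    rw [hco, Finset.sum_eq_single q]
    · simp
    · intro i _ hij
      rw [if_neg]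
      intro h
      exact hij (Subtype.ext (bpe_inj h))
    · simp
  have hF's : ∀ e ∈ F'.support, (e 0, e 1) ∈ E := by
    intro e he
    rw [mem_support_iff, hco] at he
    obtain ⟨j, _, hj⟩ := Finset.exists_ne_zero_of_sum_ne_zero he
    have h1 : bpe j.1 = e := by
      by_contra h
      simp [h] at hj
    rw [← h1]
    simp
  have hF'0 : F' ≠ 0 := by
    intro h0
    apply ht0
    ext q
    rw [← hco' q, h0]; simp
  have hF'z : ∀ z ∈ Z, eval z F' = 0 := by
    intro z hz
    let mu : (E → ℚ) →ₗ[ℚ] ℚ := ∑ q : E, (t q : ℚ) • LinearMap.proj q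
    have hmu : ∀ w, mu w = ∑ q : E, (t q : ℚ) * w q := by
      intro w; simp [mu]
    have h4 : Submodule.span ℚ (Set.range ((fun z : Z => v z.1) ∘ a)) ≤ mu.ker := by
      rw [Submodule.span_le]
      rintro _ ⟨k, rfl⟩
      have := congrArg (Int.cast : ℤ → ℚ) (ht1 k)
      simp only [Matrix.of_apply] at this
      push_cast at this
      change mu _ = 0
      rw [hmu, ← this]
      exact Finset.sum_congr rfl fun q _ => mul_comm _ _
    rw [hsp] at h4
    have h5 : mu (v z) = 0 := h4 (Submodule.subset_span ⟨⟨z, hz⟩, rfl⟩)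
    rw [hmu] at h5
    rw [hsum F' hF's z]
    simp only [hco']
    simp only [v] at h5
    exact_mod_cast h5
  have hF'd : (map (Int.castRingHom ℚ) F').totalDegree ≤ d := by
    refine (Finset.sup_mono (support_map_subset _ _)).trans ?_
    refine Finset.sup_le fun e he => ?_
    rw [hdegsum]
    exact (hEm _).mp (hF's e he)
  have hinj : Function.Injective (map (σ := Fin 2) (Int.castRingHom ℚ)) :=
    map_injective _ Int.cast_injective
  have hG0 : map (Int.castRingHom ℚ) F' ≠ 0 := by
    rw [Ne, ← map_zero (map (Int.castRingHom ℚ)), hinj.eq_iff]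
    exact hF'0
  have hdQ : (map (Int.castRingHom ℚ) F).totalDegree = d := by
    rw [← hd, totalDegree, totalDegree, support_map_of_injective _ Int.cast_injective]
  by_cases hdv : map (Int.castRingHom ℚ) F ∣ map (Int.castRingHom ℚ) F'
  · right
    obtain ⟨H, hH⟩ := hdv
    have hH0 : H ≠ 0 := by
      rintro rfl
      exact hG0 (by rw [hH, mul_zero])
    have h1 := totalDegree_mul_of_isDomain hF.ne_zero hH0
    rw [← hH, hdQ] at h1
    have h2 : H.totalDegree = 0 := by omega
    rw [totalDegree_eq_zero_iff_eq_C] at h2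
    refine ⟨F', coeff 0 H, ?_, ?_, ?_, ?_⟩
    · intro h0
      rw [h0] at h2
      exact hH0 (by rw [h2, C_0])
    · rw [← h2, hH, mul_comm]
    · intro e he
      exact (hEm _).mp (hF's e he)
    · intro e
      by_cases he : e ∈ F'.support
      · have := hco' ⟨_, hF's e he⟩
        simp only [bpe_surj] at this
        rw [this]
        exact_mod_cast ht2 ⟨_, hF's e he⟩
      · rw [notMem_support_iff.mp he]
        simp only [Int.cast_zero, abs_zero]
        positivity
  · left
    refine (bezout_int F _ hF hdv Z ?_).trans ?_
    · intro z hz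
      refine ⟨hZF z hz, ?_⟩
      have := hF'z z hz
      have h2 := MvPolynomial.eval₂_comp_left (Int.castRingHom ℚ) (RingHom.id ℤ) z F'
      rw [eval_map]
      rw [← MvPolynomial.eval₂_id] at this
      simp only [this, map_zero, RingHom.comp_id] at h2
      exact h2.symm
    · rw [hd]; exact Nat.mul_le_mul_left _ hF'd

lemma bp_degsum (e : Fin 2 →₀ ℕ) : (e.sum fun _ k => k) = e 0 + e 1 := by
  rw [Finsupp.sum_fintype _ _ (by simp)]
  simp

lemma bp_map_eval (F : MvPolynomial (Fin 2) ℤ) (z : Fin 2 → ℤ) :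
    eval (fun i => (z i : ℚ)) (map (Int.castRingHom ℚ) F) = ((eval z F : ℤ) : ℚ) := by
  have h2 := MvPolynomial.eval₂_comp_left (Int.castRingHom ℚ) (RingHom.id ℤ) z F
  rw [eval_map, ← MvPolynomial.eval₂_id]
  simpa [Function.comp_def] using h2.symm

lemma bp_map_deg (F : MvPolynomial (Fin 2) ℤ) :
    (map (Int.castRingHom ℚ) F).totalDegree = F.totalDegree := by
  rw [totalDegree, totalDegree, support_map_of_injective _ Int.cast_injective]

lemma bp_deriv_bound (d : ℕ) (F : MvPolynomial (Fin 2) ℤ) (A P : ℝ) (hP : 1 ≤ P)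
    (hs : ∀ e ∈ F.support, e 0 + e 1 ≤ d) (hA : ∀ e, |((coeff e F : ℤ) : ℝ)| ≤ A)
    (z : Fin 2 → ℤ) (hz : ∀ i, |(z i : ℝ)| ≤ P) :
    |((eval z (pderiv 1 F) : ℤ) : ℝ)| ≤ ((d + 1) ^ 2 : ℕ) * (A * d * P ^ d) := by
  classical
  have hA0 : 0 ≤ A := (abs_nonneg _).trans (hA 0)
  have h1 : eval z (pderiv 1 F) = ∑ e ∈ F.support, eval z (pderiv 1 (monomial e (coeff e F))) := by
    conv_lhs => rw [as_sum F]
    simp only [map_sum]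
  rw [h1]
  push_cast
  refine (Finset.abs_sum_le_sum_abs _ _).trans ?_
  have h2 : F.support.card ≤ (d + 1) ^ 2 := by
    have : F.support ⊆ (Finset.range (d+1) ×ˢ Finset.range (d+1)).image bpe := by
      intro e he
      refine Finset.mem_image.mpr ⟨(e 0, e 1), ?_, bpe_surj e⟩
      have := hs e he
      simp; omega
    refine (Finset.card_le_card this).trans (Finset.card_image_le.trans ?_)
    simp [sq]
  have h3 : ∀ e ∈ F.support, |((eval z (pderiv 1 (monomial e (coeff e F))) : ℤ) : ℝ)| ≤ A * d * P ^ d := by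
    intro e he
    rw [pderiv_monomial, ← bpe_surj (e - Finsupp.single 1 1), bp_eval_mono]
    have he' := hs e he
    push_cast
    rw [abs_mul, abs_mul, abs_mul, abs_pow, abs_pow]
    have g1 : |(((e 1 : ℕ)) : ℝ)| ≤ d := by
      rw [abs_of_nonneg (by positivity)]
      exact_mod_cast (by omega : e 1 ≤ d)
    have g2 : |(z 0 : ℝ)| ^ ((e - Finsupp.single 1 1 : Fin 2 →₀ ℕ) 0)
      * |(z 1 : ℝ)| ^ ((e - Finsupp.single 1 1 : Fin 2 →₀ ℕ) 1) ≤ P ^ d := by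
      calc _ ≤ P ^ ((e - Finsupp.single 1 1 : Fin 2 →₀ ℕ) 0)
              * P ^ ((e - Finsupp.single 1 1 : Fin 2 →₀ ℕ) 1) := by
            gcongr
            · exact hz 0
            · exact hz 1
        _ ≤ _ := by
            rw [← pow_add]
            refine pow_le_pow_right₀ hP ?_
            simp; omega
    have := hA e
    gcongr
    exact g2
  refine (Finset.sum_le_card_nsmul _ _ _ h3).trans ?_
  rw [nsmul_eq_mul]
  have : (F.support.card : ℝ) ≤ ((d + 1) ^ 2 : ℕ) := by exact_mod_cast h2
  gcongr
  exact_mod_cast h2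

lemma bp_no_line (d : ℕ) (F : MvPolynomial (Fin 2) ℤ) (hd : F.totalDegree = d)
    (hF : Irreducible (map (Int.castRingHom ℚ) F))
    (hline : ∀ (i : Fin 2) (x : ℤ), ¬ map (Int.castRingHom ℚ) F ∣ X i - C (x : ℚ))
    (z : Fin 2 → ℤ) (hz : eval z F = 0) : pderiv 1 F ≠ 0 := by
  classical
  intro h0
  have h1 : ∀ e ∈ F.support, e 1 = 0 := by
    intro e he
    by_contra hne
    have h2 := coeff_pderiv (i := 1) F (e - Finsupp.single 1 1)
    have h3 : e - Finsupp.single 1 1 + Finsupp.single 1 1 = e := by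
      ext i
      fin_cases i
      · simp
      · simp; omega
    rw [h0, h3, coeff_zero] at h2
    have h4 : coeff e F ≠ 0 := mem_support_iff.mp he
    have h5 : (((e - Finsupp.single 1 1 : Fin 2 →₀ ℕ) 1 : ℕ) : ℤ) + 1 ≠ 0 := by positivity
    exact mul_ne_zero h4 h5 h2.symm
  have h2 : ∀ y : ℤ, eval ![z 0, y] F = 0 := by
    intro y
    rw [← hz]
    conv_lhs => rw [as_sum F]
    conv_rhs => rw [as_sum F]
    rw [map_sum, map_sum]
    refine Finset.sum_congr rfl fun e he => ?_
    rw [← bpe_surj e, bp_eval_mono, bp_eval_mono, h1 e he]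
    simp
  have hinj : Function.Injective (fun j : ℕ => (![z 0, (j : ℤ)] : Fin 2 → ℤ)) := by
    intro a b hab
    have := congrFun hab 1
    simpa using this
  have h3 := bezout_int F (X 0 - C ((z 0 : ℤ) : ℚ)) hF (hline 0 (z 0))
    ((Finset.range (d+1)).image (fun j : ℕ => (![z 0, (j : ℤ)] : Fin 2 → ℤ))) (by
      intro w hw
      obtain ⟨j, _, rfl⟩ := Finset.mem_image.mp hw
      exact ⟨h2 _, by simp⟩)
  rw [Finset.card_image_of_injective _ hinj, Finset.card_range, hd] at h3
  have h4 : (X 0 - C ((z 0 : ℤ) : ℚ) : MvPolynomial (Fin 2) ℚ).totalDegree ≤ 1 :=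
    (totalDegree_sub_C_le _ _).trans (by simp)
  have := Nat.mul_le_mul_left d h4
  omega

lemma bp_core (d : ℕ) (F : MvPolynomial (Fin 2) ℤ) (hd : F.totalDegree = d)
    (hF : Irreducible (map (Int.castRingHom ℚ) F))
    (hline : ∀ (i : Fin 2) (x : ℤ), ¬ map (Int.castRingHom ℚ) F ∣ X i - C (x : ℚ))
    (P : Fin 2 → ℝ) (M : ℝ) (hM : 1 ≤ M) (hPM : ∀ i, P i ≤ M)
    (E : Finset (ℕ × ℕ)) (g : ℕ) (hg : ∀ q ∈ E, q.1 + q.2 ≤ g)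
    (hEF : ∀ G : MvPolynomial (Fin 2) ℚ, G ≠ 0 → (∀ e ∈ G.support, (e 0, e 1) ∈ E) →
      ¬ map (Int.castRingHom ℚ) F ∣ G)
    (Q k : ℕ) (hQ : Q ≠ 0)
    (hE : (E.card.factorial : ℝ) * ∏ q ∈ E, (P 0 ^ q.1 * P 1 ^ q.2)
      < (Q : ℝ) ^ (E.card * (E.card - 1) / 2))
    (hk : ((d + 1) ^ 2 : ℕ) * ((((d + 1) ^ 2 : ℕ) * M ^ d) ^ ((d + 1) ^ 2) * d * M ^ d) < (Q : ℝ) ^ k)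
    (Z : Finset (Fin 2 → ℤ)) (hZF : ∀ z ∈ Z, eval z F = 0)
    (hZP : ∀ z ∈ Z, ∀ i, |(z i : ℝ)| ≤ P i) :
    Z.card ≤ d * d + k * (d * g * (d * (2 ^ k * Q))) := by
  classical
  rcases Z.eq_empty_or_nonempty with rfl | ⟨z1, hz1⟩
  · simp
  rcases bp_small d F hd hF M hM Z hZF (fun z hz i => (hZP z hz i).trans (hPM i)) with h | h
  · omega
  obtain ⟨F', c, hc, hFF', hsupp, hco⟩ := h
  have hF'd : F'.totalDegree ≤ d := by
    refine Finset.sup_le fun e he => ?_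
    rw [bp_degsum]
    exact hsupp e he
  have hF'Z : ∀ z ∈ Z, eval z F' = 0 := by
    intro z hz
    have h1 := bp_map_eval F' z
    rw [hFF', map_mul, bp_map_eval, hZF z hz] at h1
    simp at h1
    exact_mod_cast h1.symm
  -- singular points
  have hsing : (Z.filter (fun z => eval z (pderiv 1 F') = 0)).card ≤ d * d := by
    have hD : map (Int.castRingHom ℚ) (pderiv 1 F') = C c * map (Int.castRingHom ℚ) (pderiv 1 F) := by
      rw [← pderiv_map, hFF', pderiv_C_mul, pderiv_map]
    have hdeg : ∀ e ∈ (map (Int.castRingHom ℚ) (pderiv 1 F')).support, e 0 + e 1 + 1 ≤ d := by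
      intro e he
      have h1 := support_map_subset _ _ he
      rw [mem_support_iff, coeff_pderiv] at h1
      have h2 := hsupp _ (mem_support_iff.mpr (left_ne_zero_of_mul h1))
      simp at h2
      omega
    have hne : pderiv 1 F ≠ 0 := bp_no_line d F hd hF hline z1 (hZF z1 hz1)
    have hne' : map (Int.castRingHom ℚ) (pderiv 1 F') ≠ 0 := by
      rw [hD]
      refine mul_ne_zero (by rwa [Ne, C_eq_zero]) ?_
      rw [Ne, ← map_zero (map (Int.castRingHom ℚ)), (map_injective _ Int.cast_injective).eq_iff]
      exact hne
    have hdd : (map (Int.castRingHom ℚ) (pderiv 1 F')).totalDegree ≤ d := by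
      refine Finset.sup_le fun e he => ?_
      rw [bp_degsum]
      have := hdeg e he
      omega
    have hndv : ¬ map (Int.castRingHom ℚ) F ∣ map (Int.castRingHom ℚ) (pderiv 1 F') := by
      rintro ⟨H, hH⟩
      have hH0 : H ≠ 0 := by
        rintro rfl
        exact hne' (by rw [hH, mul_zero])
      have h1 := totalDegree_mul_of_isDomain hF.ne_zero hH0
      rw [← hH, bp_map_deg F, hd] at h1
      obtain ⟨e, he⟩ := support_nonempty.mpr hne'
      have h2 := hdeg e he
      have h3 : (map (Int.castRingHom ℚ) (pderiv 1 F')).totalDegree ≤ d - 1 := by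
        refine Finset.sup_le fun e he => ?_
        rw [bp_degsum]
        have := hdeg e he
        omega
      omega
    refine (bezout_int F _ hF hndv _ ?_).trans ?_
    · intro z hz
      obtain ⟨hz, hz'⟩ := Finset.mem_filter.mp hz
      refine ⟨hZF z hz, ?_⟩
      rw [bp_map_eval, hz', Int.cast_zero]
    · rw [hd]; exact Nat.mul_le_mul_left _ hdd
  obtain ⟨S, hSc, hS⟩ := bp_primes Q hQ k
  have hcover : Z ⊆ (Z.filter (fun z => eval z (pderiv 1 F') = 0)) ∪
      S.biUnion (fun p => Z.filter (fun z => ¬ (p : ℤ) ∣ eval z (pderiv 1 F'))) := by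
    intro z hz
    rw [Finset.mem_union, Finset.mem_filter, Finset.mem_biUnion]
    by_cases h0 : eval z (pderiv 1 F') = 0
    · exact Or.inl ⟨hz, h0⟩
    · right
      by_contra hcon
      push Not at hcon
      have h1 : ∀ p ∈ S, (p : ℤ) ∣ eval z (pderiv 1 F') := by
        intro p hp
        have := hcon p hp
        rw [Finset.mem_filter, not_and, not_not] at this
        exact this hz
      have h2 : (∏ p ∈ S, (p : ℤ)) ∣ eval z (pderiv 1 F') := by
        apply Finset.prod_dvd_of_coprime _ h1
        intro p hp q hq hpq
        exact Nat.isCoprime_iff_coprime.mpr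
          ((Nat.coprime_primes (hS p hp).1 (hS q hq).1).mpr hpq)
      have h3 := Int.le_of_dvd (abs_pos.mpr h0) ((dvd_abs _ _).mpr h2)
      have h4 : (Q : ℝ) ^ k ≤ ∏ p ∈ S, (p : ℝ) := by
        rw [← hSc, ← Finset.prod_const]
        refine Finset.prod_le_prod (fun _ _ => by positivity) fun p hp => ?_
        exact_mod_cast (hS p hp).2.1.le
      have h5 := bp_deriv_bound d F' _ M hM hsupp hco z (fun i => (hZP z hz i).trans (hPM i))
      have h6 : ∏ p ∈ S, (p : ℝ) ≤ |((eval z (pderiv 1 F') : ℤ) : ℝ)| := by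
        have := (Int.cast_le (R := ℝ)).mpr h3
        push_cast at this
        exact this
      linarith
  refine (Finset.card_le_card hcover).trans ((Finset.card_union_le _ _).trans ?_)
  refine add_le_add hsing (Finset.card_biUnion_le.trans ?_)
  rw [← hSc, ← smul_eq_mul]
  refine Finset.sum_le_card_nsmul _ _ _ fun p hp => ?_
  obtain ⟨hpp, hpQ, hpQ2⟩ := hS p hp
  rw [hSc]
  have hp2 : d * g * (d * p) ≤ d * g * (d * (2 ^ k * Q)) := by gcongr
  refine le_trans ?_ hp2
  refine bp_count_mod F' d hF'd p hpp (d * g) _ ?_ ?_ ?_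
  · intro z hz
    exact hF'Z z (Finset.mem_filter.mp hz).1
  · intro z hz
    exact (Finset.mem_filter.mp hz).2
  · intro z0 hz0 Y hYZ hY
    have hYZ' : ∀ z ∈ Y, z ∈ Z := fun z hz => (Finset.mem_filter.mp (hYZ hz)).1
    have hnd := (Finset.mem_filter.mp hz0).2
    obtain ⟨c', hc'⟩ : ∃ c' : ℤ, (p : ℤ) ∣ 1 - c' * eval z0 (pderiv 1 F') := by
      have hcop : IsCoprime (p : ℤ) (eval z0 (pderiv 1 F')) :=
        ((Nat.prime_iff_prime_int.mp hpp).coprime_iff_not_dvd).mpr hnd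
      obtain ⟨u, v, huv⟩ := hcop
      exact ⟨v, u, by linear_combination -huv⟩
    have hE' : (E.card.factorial : ℝ) * ∏ q ∈ E, (P 0 ^ q.1 * P 1 ^ q.2)
        < (p : ℝ) ^ (E.card * (E.card - 1) / 2) := by
      refine hE.trans_le ?_
      gcongr
    obtain ⟨G, hG0, hGs, hGz⟩ := bp_aux F' p z0 c' hc' E P hE' Y (fun z hz => hF'Z z (hYZ' z hz))
      hY (fun z hz => hZP z (hYZ' z hz))
    refine (bezout_int F G hF (hEF G hG0 hGs) Y (fun z hz => ⟨hZF z (hYZ' z hz), hGz z hz⟩)).trans ?_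
    rw [hd]
    refine Nat.mul_le_mul_left _ (Finset.sup_le fun e he => ?_)
    rw [bp_degsum]
    exact hg _ (hGs e he)

lemma bm_box (Z : Finset (Fin 2 → ℤ)) (i : Fin 2) (p : ℝ) (hp : 1 ≤ p)
    (hZ : ∀ z ∈ Z, |(z i : ℝ)| ≤ p) : ((Z.image (fun z => z i)).card : ℝ) ≤ 3 * p := by
  have h1 : Z.image (fun z => z i) ⊆ Finset.Icc (-⌊p⌋) ⌊p⌋ := by
    intro x hx
    obtain ⟨z, hz, rfl⟩ := Finset.mem_image.mp hx
    have := abs_le.mp (hZ z hz)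
    rw [Finset.mem_Icc]
    constructor
    · have : -z i ≤ ⌊p⌋ := Int.le_floor.mpr (by push_cast; linarith [this.1])
      linarith
    · exact Int.le_floor.mpr this.2
  have h2 := Finset.card_le_card h1
  rw [Int.card_Icc] at h2
  have h3 : (0 : ℤ) ≤ ⌊p⌋ := Int.floor_nonneg.mpr (by linarith)
  have h4 : (((Z.image (fun z => z i)).card : ℤ)) ≤ 2 * ⌊p⌋ + 1 := by omega
  have h5 : (((Z.image (fun z => z i)).card : ℝ)) ≤ 2 * ⌊p⌋ + 1 := by exact_mod_cast h4
  have := Int.floor_le p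
  linarith

lemma bm_unbal (d : ℕ) (F : MvPolynomial (Fin 2) ℤ) (hd : F.totalDegree = d)
    (hF : Irreducible (map (Int.castRingHom ℚ) F))
    (hline : ∀ (i : Fin 2) (x : ℤ), ¬ map (Int.castRingHom ℚ) F ∣ X i - C (x : ℚ))
    (i : Fin 2) (p : ℝ) (hp : 1 ≤ p)
    (Z : Finset (Fin 2 → ℤ)) (hZF : ∀ z ∈ Z, eval z F = 0)
    (hZP : ∀ z ∈ Z, |(z i : ℝ)| ≤ p) : (Z.card : ℝ) ≤ 3 * d * p := by
  classical
  have h1 := Finset.card_le_mul_card_image (f := fun z : Fin 2 → ℤ => z i) Z d (by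
    intro x _
    have h3 := bezout_int F (X i - C (x : ℚ)) hF (hline i x) (Z.filter (fun z => z i = x)) (by
      intro z hz
      obtain ⟨hz, hzx⟩ := Finset.mem_filter.mp hz
      exact ⟨hZF z hz, by simp [hzx]⟩)
    have h4 : (X i - C (x : ℚ) : MvPolynomial (Fin 2) ℚ).totalDegree ≤ 1 :=
      (totalDegree_sub_C_le _ _).trans (by simp)
    rw [hd] at h3
    have := Nat.mul_le_mul_left d h4
    omega)
  have h2 := bm_box Z i p hp hZP
  have h3 : (Z.card : ℝ) ≤ d * ((Z.image (fun z => z i)).card : ℝ) := by exact_mod_cast h1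
  have : (d : ℝ) * ((Z.image (fun z => z i)).card : ℝ) ≤ d * (3 * p) := by gcongr
  linarith

lemma bm_line (d : ℕ) (hd1 : 1 ≤ d) (F : MvPolynomial (Fin 2) ℤ) (hd : F.totalDegree = d)
    (i j : Fin 2) (hij : i ≠ j) (x : ℤ) (hx : map (Int.castRingHom ℚ) F ∣ X i - C (x : ℚ))
    (p : ℝ) (hp : 1 ≤ p)
    (Z : Finset (Fin 2 → ℤ)) (hZF : ∀ z ∈ Z, eval z F = 0)
    (hZP : ∀ z ∈ Z, |(z j : ℝ)| ≤ p) :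
    (Z.card : ℝ) ≤ 3 * p ∧ ∀ e ∈ F.support, e = Finsupp.single i 1 ∨ e = 0 := by
  classical
  obtain ⟨H, hH⟩ := hx
  constructor
  · have h1 : ∀ z ∈ Z, z i = x := by
      intro z hz
      have h2 := congrArg (eval (fun i => (z i : ℚ))) hH
      rw [map_mul, bp_map_eval, hZF z hz] at h2
      simp at h2
      have : (z i : ℚ) = x := by linarith
      exact_mod_cast this
    rw [← Finset.card_image_of_injOn (f := fun z : Fin 2 → ℤ => z j) (s := Z)]
    · exact bm_box Z j p hp hZP
    · intro z hz w hw hzw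
      funext l
      by_cases hl : l = i
      · subst hl; rw [h1 z hz, h1 w hw]
      · have : l = j := by omega
        subst this; exact hzw
  · have hne : (X i - C (x : ℚ) : MvPolynomial (Fin 2) ℚ) ≠ 0 := by
      intro h
      have h2 := congrArg (eval (fun _ => (x : ℚ) + 1)) h
      simp at h2
    have hF0 : map (Int.castRingHom ℚ) F ≠ 0 := by
      intro h; rw [h, zero_mul] at hH; exact hne hH
    have hH0 : H ≠ 0 := by
      intro h; rw [h, mul_zero] at hH; exact hne hH
    have h1 := totalDegree_mul_of_isDomain hF0 hH0
    have h4 : (X i - C (x : ℚ) : MvPolynomial (Fin 2) ℚ).totalDegree ≤ 1 :=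
      (totalDegree_sub_C_le _ _).trans (by simp)
    rw [← hH, bp_map_deg, hd] at h1
    have h5 : H.totalDegree = 0 := by omega
    rw [totalDegree_eq_zero_iff_eq_C] at h5
    have h6 : coeff 0 H ≠ 0 := by
      intro h; rw [h, C_0] at h5; exact hH0 h5
    intro e he
    have h7 : coeff e (X i - C (x : ℚ) : MvPolynomial (Fin 2) ℚ) ≠ 0 := by
      rw [hH, h5, mul_comm, coeff_C_mul, coeff_map]
      refine mul_ne_zero h6 ?_
      simpa using mem_support_iff.mp he
    by_contra hcon
    push Not at hcon
    apply h7
    rw [coeff_sub, coeff_X, coeff_C, if_neg (fun h => hcon.1 h.symm), if_neg (fun h => hcon.2 h.symm), sub_zero]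

lemma bm_gauss (m n : ℕ) (h : m ≤ n) :
    ∑ i ∈ Finset.Ico m n, (i : ℝ) = ((n : ℝ) - m) * (n + m - 1) / 2 := by
  induction n, h using Nat.le_induction with
  | base => simp
  | succ n hn ih => rw [Finset.sum_Ico_succ_top hn, ih]; push_cast; ring

set_option maxHeartbeats 1000000 in
lemma bm_choose (d K : ℕ) (ε : ℝ) (hε : 0 < ε)
    (hK : (d : ℝ) ^ 2 + 4 * d + 1 ≤ ε * (K - d ^ 2 - 1)) (hK2 : d ^ 2 + d + 3 ≤ K)
    (a b M : ℝ) (ha : 0 < a) (hb : 0 < b) (haM : a ≤ M) (hbM : b ≤ M)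
    (hεa : ε * M ≤ a) (hεb : ε * M ≤ b)
    (m n : ℕ) (hm : m ≤ d) (hn : n ≤ d) (hmn : m ≠ 0 ∨ n ≠ 0) :
    ∃ E : Finset (ℕ × ℕ), (∀ q ∈ E, ¬ (m ≤ q.1 ∧ n ≤ q.2)) ∧
      (∀ q ∈ E, q.1 ≤ ⌈K / ε⌉₊ + d + 1 ∧ q.2 ≤ ⌈K / ε⌉₊ + d + 1) ∧
      2 ≤ E.card ∧
      ∑ q ∈ E, (q.1 * a + q.2 * b) ≤
        (E.card : ℝ) * (E.card - 1) / 2 * (a * b / (m * a + n * b) + ε * M) := by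
  classical
  have hM : 0 < M := ha.trans_le haM
  obtain ⟨N, hN1, hN2⟩ : ∃ N : ℕ, K * M ≤ N * a ∧ N * a ≤ K * M + a := by
    refine ⟨⌈K * M / a⌉₊, ?_, ?_⟩
    · have := Nat.le_ceil (K * M / a); rwa [div_le_iff₀ ha] at this
    · have := (Nat.ceil_lt_add_one (a := K * M / a) (by positivity)).le
      have h := mul_le_mul_of_nonneg_right this ha.le
      rwa [add_mul, div_mul_cancel₀ _ ha.ne', one_mul] at h
  obtain ⟨N', hN'1, hN'2⟩ : ∃ N : ℕ, K * M ≤ N * b ∧ N * b ≤ K * M + b := by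
    refine ⟨⌈K * M / b⌉₊, ?_, ?_⟩
    · have := Nat.le_ceil (K * M / b); rwa [div_le_iff₀ hb] at this
    · have := (Nat.ceil_lt_add_one (a := K * M / b) (by positivity)).le
      have h := mul_le_mul_of_nonneg_right this hb.le
      rwa [add_mul, div_mul_cancel₀ _ hb.ne', one_mul] at h
  have hR : ∀ (N : ℕ) (a : ℝ), 0 < a → ε * M ≤ a → N * a ≤ K * M + a → N ≤ ⌈K / ε⌉₊ + d + 1 := by
    intro N a ha h1 h2
    have h3 : (N : ℝ) ≤ K / ε + 1 := by
      have h4 : (K : ℝ) * M ≤ K / ε * a := by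
        rw [div_mul_eq_mul_div, le_div_iff₀ hε]
        have : (K : ℝ) * (ε * M) ≤ K * a := by gcongr
        linarith
      have h5 : (N : ℝ) * a ≤ (K / ε + 1) * a := by linarith
      exact le_of_mul_le_mul_right h5 ha
    have h4 : (N : ℝ) ≤ ((⌈K / ε⌉₊ + d + 1 : ℕ) : ℝ) := by
      push_cast
      have := Nat.le_ceil (K / ε)
      have : (0 : ℝ) ≤ d := by positivity
      linarith
    exact_mod_cast h4
  have hKN : ∀ (N : ℕ) (a : ℝ), 0 < a → a ≤ M → K * M ≤ N * a → K ≤ N := by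
    intro N a ha h1 h2
    have h3 : (K : ℝ) * a ≤ N * a := le_trans (by gcongr) h2
    exact_mod_cast le_of_mul_le_mul_right h3 ha
  have hNR := hR N a ha hεa hN2
  have hNR' := hR N' b hb hεb hN'2
  have hKN1 := hKN N a ha haM hN1
  have hKN2 := hKN N' b hb hbM hN'1
  have hmN : m ≤ N := by omega
  set E1 := Finset.range m ×ˢ Finset.Ico 0 N' with hE1
  set E2 := Finset.Ico m N ×ˢ Finset.range n with hE2
  have hdisj : Disjoint E1 E2 := by
    rw [Finset.disjoint_left]
    intro q h1 h2
    simp [hE1, hE2] at h1 h2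
    omega
  have hcard : (((E1 ∪ E2).card : ℕ) : ℝ) = m * N' + (N - m) * n := by
    rw [Finset.card_union_of_disjoint hdisj, hE1, hE2, Finset.card_product, Finset.card_product]
    simp only [Finset.card_range, Nat.card_Ico]
    push_cast [Nat.cast_sub hmN]
    simp
  set s : ℝ := (((E1 ∪ E2).card : ℕ) : ℝ) with hs
  have hmd : (m : ℝ) ≤ d := by exact_mod_cast hm
  have hnd : (n : ℝ) ≤ d := by exact_mod_cast hn
  have hmN' : (m : ℝ) ≤ N := by exact_mod_cast hmN
  have hd0 : (0 : ℝ) ≤ d := by positivity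
  have hm0 : (0 : ℝ) ≤ m := by positivity
  have hn0 : (0 : ℝ) ≤ n := by positivity
  -- weight
  have hw1 : ∑ q ∈ E1, ((q.1 : ℝ) * a + q.2 * b) ≤ m * N' * (K * M / 2 + 2 * d * M) := by
    rw [hE1, Finset.sum_product]
    have : ∀ i ∈ Finset.range m, ∑ j ∈ Finset.Ico 0 N', ((i : ℝ) * a + j * b)
        ≤ N' * (K * M / 2 + 2 * d * M) := by
      intro i hi
      have hi' : (i : ℝ) ≤ d := by
        have := Finset.mem_range.mp hi
        exact_mod_cast (by omega : i ≤ d)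
      rw [Finset.sum_add_distrib, ← Finset.sum_mul, ← Finset.sum_mul, bm_gauss _ _ (Nat.zero_le _)]
      simp only [Finset.sum_const, Nat.card_Ico, nsmul_eq_mul]
      have h1 : (i : ℝ) * a ≤ d * M := by gcongr
      have h2 : (0 : ℝ) ≤ d * M := by positivity
      have h3 : (N' : ℝ) * (i * a + (N' * b - b) / 2) ≤ N' * (K * M / 2 + 2 * d * M) := by
        apply mul_le_mul_of_nonneg_left _ (by positivity)
        linarith
      refine le_trans (le_of_eq ?_) h3
      push_cast [Nat.sub_zero]
      ring
    refine (Finset.sum_le_card_nsmul _ _ _ this).trans (le_of_eq ?_)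
    simp [mul_assoc]
  have hw2 : ∑ q ∈ E2, ((q.1 : ℝ) * a + q.2 * b) ≤ (N - m) * n * (K * M / 2 + 2 * d * M) := by
    rw [hE2, Finset.sum_product_right]
    have : ∀ j ∈ Finset.range n, ∑ i ∈ Finset.Ico m N, ((i : ℝ) * a + j * b)
        ≤ (N - m) * (K * M / 2 + 2 * d * M) := by
      intro j hj
      have hj' : (j : ℝ) ≤ d := by
        have := Finset.mem_range.mp hj
        exact_mod_cast (by omega : j ≤ d)
      rw [Finset.sum_add_distrib, ← Finset.sum_mul, bm_gauss _ _ hmN]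
      simp only [Finset.sum_const, Nat.card_Ico, nsmul_eq_mul]
      have h1 : (j : ℝ) * b ≤ d * M := by gcongr
      have h2 : (0 : ℝ) ≤ d * M := by positivity
      have h4 : (m : ℝ) * a ≤ d * M := by gcongr
      have h3 : ((N : ℝ) - m) * (j * b + (N * a - a + m * a) / 2) ≤ (N - m) * (K * M / 2 + 2 * d * M) := by
        apply mul_le_mul_of_nonneg_left _ (by linarith)
        linarith
      refine le_trans (le_of_eq ?_) h3
      push_cast [Nat.cast_sub hmN]
      ring
    refine (Finset.sum_le_card_nsmul _ _ _ this).trans (le_of_eq ?_)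
    simp; ring
  have hτ : 0 < m * a + n * b := by
    rcases hmn with h | h
    · have : (0 : ℝ) < m := by exact_mod_cast Nat.pos_of_ne_zero h
      positivity
    · have : (0 : ℝ) < n := by exact_mod_cast Nat.pos_of_ne_zero h
      positivity
  set u := a * b / (m * a + n * b) with hu
  have hu0 : 0 < u := by positivity
  have huM : u ≤ M := by
    rw [hu, div_le_iff₀ hτ]
    rcases hmn with h | h
    · have h1 : (1 : ℝ) ≤ m := by exact_mod_cast Nat.pos_of_ne_zero h
      have h2 : a * b ≤ M * a := by nlinarith
      have h3 : M * a ≤ M * (m * a + n * b) := by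
        gcongr
        have : 0 ≤ (n : ℝ) * b := by positivity
        nlinarith
      linarith
    · have h1 : (1 : ℝ) ≤ n := by exact_mod_cast Nat.pos_of_ne_zero h
      have h2 : a * b ≤ M * b := by nlinarith
      have h3 : M * b ≤ M * (m * a + n * b) := by
        gcongr
        have : 0 ≤ (m : ℝ) * a := by positivity
        nlinarith
      linarith
  -- lower bound on s
  have hsu : K * M - d ^ 2 * u ≤ s * u := by
    have e1 : (m : ℝ) * N' + N * n - d ^ 2 ≤ s := by
      rw [hcard]
      have : (m : ℝ) * n ≤ d * d := by gcongr
      linarith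
    have e2 : K * M ≤ ((m : ℝ) * N' + N * n) * u := by
      rw [hu, mul_div_assoc', le_div_iff₀ hτ]
      have f1 : m * a * (K * M) ≤ m * a * (N' * b) := by gcongr
      have f2 : n * b * (K * M) ≤ n * b * (N * a) := by gcongr
      linarith
    have e3 := mul_le_mul_of_nonneg_right e1 hu0.le
    linarith
  have hKs : (K : ℝ) - d ^ 2 ≤ s := by
    have : ((K : ℝ) - d ^ 2) * u ≤ s * u := by
      have : (K : ℝ) * u ≤ K * M := by gcongr
      linarith
    exact le_of_mul_le_mul_right this hu0
  have hK2' : (d : ℝ) ^ 2 + d + 3 ≤ K := by exact_mod_cast hK2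
  have hs2 : 2 ≤ s := by linarith
  have hkey : K * M + 4 * d * M ≤ (s - 1) * (u + ε * M) := by
    have e1 : (K - d ^ 2 - 1) * (ε * M) ≤ (s - 1) * (ε * M) := by
      apply mul_le_mul_of_nonneg_right _ (by positivity)
      linarith
    have e2 : ((d : ℝ) ^ 2 + 4 * d + 1) * M ≤ ε * (K - d ^ 2 - 1) * M := by gcongr
    have e3 : ((d : ℝ) ^ 2 + 1) * u ≤ (d ^ 2 + 1) * M := by gcongr
    linarith
  refine ⟨E1 ∪ E2, ?_, ?_, ?_, ?_⟩
  · intro q hq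
    simp [hE1, hE2] at hq
    omega
  · intro q hq
    simp [hE1, hE2] at hq
    omega
  · rw [hs] at hs2; exact_mod_cast hs2
  · rw [Finset.sum_union hdisj]
    have : s * (K * M + 4 * d * M) ≤ s * ((s - 1) * (u + ε * M)) := by gcongr
    have h5 : m * N' * (K * M / 2 + 2 * d * M) + (N - m) * n * (K * M / 2 + 2 * d * M)
      = s * (K * M + 4 * d * M) / 2 := by rw [hcard]; ring
    linarith

lemma bm_main (d K R k S : ℕ) (ε C1 : ℝ) (hd1 : 1 ≤ d) (hε : 0 < ε)
    (hK : (d : ℝ) ^ 2 + 4 * d + 1 ≤ ε * (K - d ^ 2 - 1)) (hK2 : d ^ 2 + d + 3 ≤ K)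
    (hR : R = ⌈K / ε⌉₊ + d + 1) (hS : S = (R + 1) * (R + 1))
    (hC1 : C1 = ((d + 1) ^ 2 : ℕ) * (((d + 1) ^ 2 : ℕ) ^ ((d + 1) ^ 2) * d))
    (hk1 : 1 ≤ k) (hk : ((d * (d + 1) ^ 2 + d : ℕ) : ℝ) ≤ ε * k)
    (F : MvPolynomial (Fin 2) ℤ) (hd : F.totalDegree = d)
    (hF : Irreducible (map (Int.castRingHom ℚ) F))
    (hline : ∀ (i : Fin 2) (x : ℤ), ¬ map (Int.castRingHom ℚ) F ∣ X i - C (x : ℚ))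
    (P : Fin 2 → ℝ) (a b M : ℝ) (hPa : P 0 = Real.exp a) (hPb : P 1 = Real.exp b)
    (ha : 0 < a) (hb : 0 < b) (haM : a ≤ M) (hbM : b ≤ M)
    (hεa : ε * M ≤ a) (hεb : ε * M ≤ b)
    (τ : ℝ) (hτ : 0 < τ) (hle : ∀ e ∈ F.support, e 0 * a + e 1 * b ≤ τ)
    (hex : ∃ e ∈ F.support, e 0 * a + e 1 * b = τ)
    (Z : Finset (Fin 2 → ℤ)) (hZF : ∀ z ∈ Z, eval z F = 0)
    (hZP : ∀ z ∈ Z, ∀ i, |(z i : ℝ)| ≤ P i) :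
    (Z.card : ℝ) ≤ (d * d + k * (d * (2 * R) * (d * (2 ^ k * (S.factorial + C1 + 2))))) *
      Real.exp (a * b / τ + ε * M) := by
  classical
  have hsupp : (map (Int.castRingHom ℚ) F).support = F.support :=
    support_map_of_injective _ Int.cast_injective
  obtain ⟨e0, he0, he0τ⟩ := hex
  obtain ⟨m, hm, hmax⟩ := Finset.exists_max_image F.support (bpw a b) ⟨e0, he0⟩
  have hmτ : (m 0 : ℝ) * a + m 1 * b = τ := by
    refine le_antisymm (hle m hm) ?_
    rw [← he0τ]
    have := hmax e0 he0
    rw [bpw, bpw, Prod.Lex.toLex_le_toLex] at this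
    rcases this with h | h
    · exact h.le
    · exact h.1.le
  have hmd : m 0 + m 1 ≤ d := by
    have := le_totalDegree hm
    rwa [bp_degsum, hd] at this
  have hmn : m 0 ≠ 0 ∨ m 1 ≠ 0 := by
    by_contra h
    push Not at h
    rw [h.1, h.2] at hmτ
    simp at hmτ
    linarith
  obtain ⟨E, hE1, hE2, hE3, hE4⟩ := bm_choose d K ε hε hK hK2 a b M ha hb haM hbM hεa hεb
    (m 0) (m 1) (by omega) (by omega) hmn
  rw [hmτ] at hE4
  rw [← hR] at hE2
  have hM : 0 < M := ha.trans_le haM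
  set B := Real.exp (a * b / τ + ε * M) with hB
  have hB1 : 1 ≤ B := Real.one_le_exp (by positivity)
  have hC10 : 0 ≤ C1 := by rw [hC1]; positivity
  set A0 : ℝ := S.factorial + C1 + 1 with hA0
  have hS1 : (1 : ℝ) ≤ S.factorial := by exact_mod_cast Nat.factorial_pos S
  have hA01 : 1 ≤ A0 := by linarith
  have hAB : 1 ≤ A0 * B := one_le_mul_of_one_le_of_one_le hA01 hB1
  set Q := ⌈A0 * B⌉₊ with hQ
  have hQ1 : A0 * B ≤ Q := Nat.le_ceil _
  have hQ2 : (Q : ℝ) ≤ (A0 + 1) * B := by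
    have := (Nat.ceil_lt_add_one (a := A0 * B) (by positivity)).le
    linarith
  have hQ0 : Q ≠ 0 := by
    intro h; rw [h] at hQ1; push_cast at hQ1; linarith
  set r := E.card * (E.card - 1) / 2 with hr
  have hr2 : 2 * r = E.card * (E.card - 1) :=
    Nat.mul_div_cancel' (Nat.even_mul_pred_self _).two_dvd
  have hr1 : r ≠ 0 := by
    intro h
    rw [h] at hr2
    have : 0 < E.card * (E.card - 1) := Nat.mul_pos (by omega) (by omega)
    omega
  have hrR : (r : ℝ) = (E.card : ℝ) * (E.card - 1) / 2 := by
    have h : ((2 * r : ℕ) : ℝ) = ((E.card * (E.card - 1) : ℕ) : ℝ) := by rw [hr2]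
    push_cast [Nat.cast_sub (by omega : 1 ≤ E.card)] at h
    linarith
  have hEc : E.card ≤ S := by
    have : E ⊆ Finset.range (R + 1) ×ˢ Finset.range (R + 1) := by
      intro q hq
      have := hE2 q hq
      simp; omega
    refine (Finset.card_le_card this).trans ?_
    simp [hS]
  have hprod : ∏ q ∈ E, (P 0 ^ q.1 * P 1 ^ q.2) ≤ B ^ r := by
    have h1 : ∀ q ∈ E, P 0 ^ q.1 * P 1 ^ q.2 = Real.exp (q.1 * a + q.2 * b) := by
      intro q _
      rw [hPa, hPb, Real.exp_add, Real.exp_nat_mul, Real.exp_nat_mul]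
    rw [Finset.prod_congr rfl h1, ← Real.exp_sum, hB, ← Real.exp_nat_mul]
    apply Real.exp_le_exp.mpr
    rw [hrR]
    exact hE4
  have hEQ : (E.card.factorial : ℝ) * ∏ q ∈ E, (P 0 ^ q.1 * P 1 ^ q.2)
      < (Q : ℝ) ^ (E.card * (E.card - 1) / 2) := by
    have h1 : (E.card.factorial : ℝ) ≤ S.factorial := by exact_mod_cast Nat.factorial_le hEc
    calc _ ≤ (S.factorial : ℝ) * B ^ r := by
          gcongr
          refine Finset.prod_nonneg fun q _ => ?_
          rw [hPa, hPb]; positivity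
      _ < A0 * B ^ r := by
          apply mul_lt_mul_of_pos_right _ (by positivity)
          linarith
      _ ≤ A0 ^ r * B ^ r := by
          gcongr
          exact le_self_pow₀ hA01 hr1
      _ = (A0 * B) ^ r := (mul_pow _ _ _).symm
      _ ≤ _ := by rw [← hr]; gcongr
  have hQk : ((d + 1) ^ 2 : ℕ) * ((((d + 1) ^ 2 : ℕ) * Real.exp M ^ d) ^ ((d + 1) ^ 2) * d * Real.exp M ^ d)
      < (Q : ℝ) ^ k := by
    calc _ = C1 * Real.exp M ^ (d * (d + 1) ^ 2 + d) := by
          rw [hC1, mul_pow, pow_add, pow_mul]; ring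
      _ ≤ C1 * B ^ k := by
          gcongr
          rw [hB, ← Real.exp_nat_mul, ← Real.exp_nat_mul]
          apply Real.exp_le_exp.mpr
          have h1 : ((d * (d + 1) ^ 2 + d : ℕ) : ℝ) * M ≤ ε * k * M := by gcongr
          have h2 : 0 ≤ (k : ℝ) * (a * b / τ) := by positivity
          linarith
      _ < A0 * B ^ k := by
          apply mul_lt_mul_of_pos_right _ (by positivity)
          linarith
      _ ≤ A0 ^ k * B ^ k := by
          gcongr
          exact le_self_pow₀ hA01 (by omega)
      _ = (A0 * B) ^ k := (mul_pow _ _ _).symm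
      _ ≤ _ := by gcongr
  have hfin := bp_core d F hd hF hline P (Real.exp M) (Real.one_le_exp hM.le) (by
      intro i
      fin_cases i
      · simp only [Fin.zero_eta, Fin.isValue, hPa]; exact Real.exp_le_exp.mpr haM
      · simp only [Fin.mk_one, Fin.isValue, hPb]; exact Real.exp_le_exp.mpr hbM)
    E (2 * R) (fun q hq => by have := hE2 q hq; omega) (by
      intro G hG0 hGE hdvd
      obtain ⟨e, he, hme⟩ := bp_lead _ G a b hb hG0 hdvd m (by rw [hsupp]; exact hm)
        (by rw [hsupp]; exact hmax)
      exact hE1 _ (hGE e he) ⟨hme 0, hme 1⟩)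
    Q k hQ0 hEQ hQk Z hZF hZP
  have hfin' : (Z.card : ℝ) ≤ d * d + k * (d * (2 * R) * (d * (2 ^ k * Q))) := by exact_mod_cast hfin
  calc (Z.card : ℝ) ≤ d * d + k * (d * (2 * R) * (d * (2 ^ k * Q))) := hfin'
    _ ≤ d * d * B + k * (d * (2 * R) * (d * (2 ^ k * ((A0 + 1) * B)))) := by
        have e1 : (d : ℝ) * d ≤ d * d * B := le_mul_of_one_le_right (by positivity) hB1
        gcongr
    _ = _ := by rw [hA0]; ring

lemma bm_final (d : ℕ) (hd : 1 ≤ d) (ε : ℝ) (hε : 0 < ε) :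
    ∃ C : ℝ, ∀ F : MvPolynomial (Fin 2) ℤ,
      F.totalDegree = d →
      Irreducible (MvPolynomial.map (Int.castRingHom ℚ) F) →
      ∀ P : Fin 2 → ℝ, (∀ i, 1 ≤ P i) →
      ∀ T : ℝ, 1 < T →
        IsGreatest {x : ℝ | ∃ e ∈ F.support, x = P 0 ^ (e 0) * P 1 ^ (e 1)} T →
        ∀ Z : Finset (Fin 2 → ℤ), (∀ z ∈ Z, eval z F = 0) → (∀ z ∈ Z, ∀ i, |(z i : ℝ)| ≤ P i) →
        (Z.card : ℝ)
          ≤ C * (max (P 0) (P 1)) ^ ε * Real.exp (Real.log (P 0) * Real.log (P 1) / Real.log T) := by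
  classical
  obtain ⟨K, hK, hK2⟩ : ∃ K : ℕ, (d : ℝ) ^ 2 + 4 * d + 1 ≤ ε * (K - d ^ 2 - 1) ∧ d ^ 2 + d + 3 ≤ K := by
    refine ⟨⌈((d : ℝ) ^ 2 + 4 * d + 1) / ε⌉₊ + d ^ 2 + d + 3, ?_, by omega⟩
    have h1 := Nat.le_ceil (((d : ℝ) ^ 2 + 4 * d + 1) / ε)
    rw [div_le_iff₀ hε] at h1
    have h2 : (0 : ℝ) ≤ ε * (d + 2) := by positivity
    push_cast
    linarith
  obtain ⟨k, hk1, hk⟩ : ∃ k : ℕ, 1 ≤ k ∧ ((d * (d + 1) ^ 2 + d : ℕ) : ℝ) ≤ ε * k := by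
    refine ⟨⌈((d * (d + 1) ^ 2 + d : ℕ) : ℝ) / ε⌉₊ + 1, by omega, ?_⟩
    have h1 := Nat.le_ceil (((d * (d + 1) ^ 2 + d : ℕ) : ℝ) / ε)
    rw [div_le_iff₀ hε] at h1
    rw [Nat.cast_add_one]
    linarith
  obtain ⟨R, hR⟩ : ∃ R, R = ⌈K / ε⌉₊ + d + 1 := ⟨_, rfl⟩
  obtain ⟨S, hS⟩ : ∃ S, S = (R + 1) * (R + 1) := ⟨_, rfl⟩
  obtain ⟨C1, hC1⟩ : ∃ C1 : ℝ, C1 = ((d + 1) ^ 2 : ℕ) * (((d + 1) ^ 2 : ℕ) ^ ((d + 1) ^ 2) * d) := ⟨_, rfl⟩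
  have hC10 : 0 ≤ C1 := by rw [hC1]; positivity
  obtain ⟨C2, hC2⟩ : ∃ C2 : ℝ, C2 = d * d + k * (d * (2 * R) * (d * (2 ^ k * (S.factorial + C1 + 2)))) :=
    ⟨_, rfl⟩
  have hC20 : 0 ≤ C2 := by rw [hC2]; positivity
  have hd' : (1 : ℝ) ≤ d := by exact_mod_cast hd
  refine ⟨3 * d + C2, ?_⟩
  intro F hFd hF P hP T hT hTg Z hZF hZP
  set a := Real.log (P 0) with ha
  set b := Real.log (P 1) with hb
  have hP0 := hP 0
  have hP1 := hP 1
  have hP0' : 0 < P 0 := by linarith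
  have hP1' : 0 < P 1 := by linarith
  have ha0 : 0 ≤ a := Real.log_nonneg hP0
  have hb0 : 0 ≤ b := Real.log_nonneg hP1
  have hPa : P 0 = Real.exp a := (Real.exp_log hP0').symm
  have hPb : P 1 = Real.exp b := (Real.exp_log hP1').symm
  have hτ : 0 < Real.log T := Real.log_pos hT
  have hMx : max (P 0) (P 1) ^ ε = Real.exp (ε * max a b) := by
    have : max (P 0) (P 1) = Real.exp (max a b) := by
      rw [Real.exp_monotone.map_max, ← hPa, ← hPb]
    rw [this, ← Real.exp_mul, mul_comm]
  set M := max a b with hM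
  have haM : a ≤ M := le_max_left _ _
  have hbM : b ≤ M := le_max_right _ _
  have hM0 : 0 ≤ M := ha0.trans haM
  have hu : 0 ≤ a * b / Real.log T := by positivity
  have hX : 1 ≤ Real.exp (ε * M) := Real.one_le_exp (by positivity)
  have hU : 1 ≤ Real.exp (a * b / Real.log T) := Real.one_le_exp hu
  rw [hMx]
  by_cases hline : ∀ (i : Fin 2) (x : ℤ), ¬ map (Int.castRingHom ℚ) F ∣ X i - C (x : ℚ)
  · by_cases h1 : a ≤ ε * M
    · have h2 := bm_unbal d F hFd hF hline 0 (P 0) hP0 Z hZF (fun z hz => hZP z hz 0)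
      have h3 : P 0 ≤ Real.exp (ε * M) := by rw [hPa]; exact Real.exp_le_exp.mpr h1
      calc (Z.card : ℝ) ≤ 3 * d * P 0 := h2
        _ ≤ 3 * d * Real.exp (ε * M) := by gcongr
        _ ≤ (3 * d + C2) * Real.exp (ε * M) := by gcongr; linarith
        _ ≤ _ := le_mul_of_one_le_right (by positivity) hU
    by_cases h1' : b ≤ ε * M
    · have h2 := bm_unbal d F hFd hF hline 1 (P 1) hP1 Z hZF (fun z hz => hZP z hz 1)
      have h3 : P 1 ≤ Real.exp (ε * M) := by rw [hPb]; exact Real.exp_le_exp.mpr h1'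
      calc (Z.card : ℝ) ≤ 3 * d * P 1 := h2
        _ ≤ 3 * d * Real.exp (ε * M) := by gcongr
        _ ≤ (3 * d + C2) * Real.exp (ε * M) := by gcongr; linarith
        _ ≤ _ := le_mul_of_one_le_right (by positivity) hU
    push Not at h1 h1'
    have hεM : 0 ≤ ε * M := by positivity
    have hlog : ∀ e : Fin 2 →₀ ℕ, Real.log (P 0 ^ (e 0) * P 1 ^ (e 1)) = e 0 * a + e 1 * b := by
      intro e
      rw [Real.log_mul (by positivity) (by positivity), Real.log_pow, Real.log_pow]
    have h2 := bm_main d K R k S ε C1 hd hε hK hK2 hR hS hC1 hk1 hk F hFd hF hline P a b M hPa hPb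
      (by linarith) (by linarith) haM hbM h1.le h1'.le (Real.log T) hτ (by
        intro e he
        rw [← hlog]
        exact Real.log_le_log (by positivity) (hTg.2 ⟨e, he, rfl⟩)) (by
        obtain ⟨e, he, heT⟩ := hTg.1
        exact ⟨e, he, by rw [heT, hlog]⟩) Z hZF hZP
    rw [← hC2, Real.exp_add] at h2
    calc (Z.card : ℝ) ≤ _ := h2
      _ = C2 * Real.exp (ε * M) * Real.exp (a * b / Real.log T) := by ring
      _ ≤ _ := by gcongr; linarith
  · push Not at hline
    obtain ⟨i, x, hx⟩ := hline
    have key : ∀ p : ℝ, 0 ≤ p → (Z.card : ℝ) ≤ 3 * p → p ≤ Real.exp (a * b / Real.log T) →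
        (Z.card : ℝ) ≤ (3 * d + C2) * Real.exp (ε * M) * Real.exp (a * b / Real.log T) := by
      intro p hp h1 h2
      calc (Z.card : ℝ) ≤ 3 * p := h1
        _ ≤ (3 * d + C2) * 1 * Real.exp (a * b / Real.log T) := by gcongr; linarith
        _ ≤ _ := by gcongr
    obtain ⟨e, he, heT⟩ := hTg.1
    fin_cases i
    · obtain ⟨h1, h2⟩ := bm_line d hd F hFd 0 1 (by decide) x hx (P 1) hP1 Z hZF (fun z hz => hZP z hz 1)
      refine key _ hP1'.le h1 ?_
      rcases h2 e he with rfl | rfl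
      · simp at heT
        rw [heT] at hτ ⊢
        rw [← ha] at hτ ⊢
        rw [mul_div_cancel_left₀ _ hτ.ne', ← hPb]
      · simp at heT; linarith
    · obtain ⟨h1, h2⟩ := bm_line d hd F hFd 1 0 (by decide) x hx (P 0) hP0 Z hZF (fun z hz => hZP z hz 0)
      refine key _ hP0'.le h1 ?_
      rcases h2 e he with rfl | rfl
      · simp at heT
        rw [heT] at hτ ⊢
        rw [← hb] at hτ ⊢
        rw [mul_div_cancel_right₀ _ hτ.ne', ← hPa]
      · simp at heT; linarith

end BPHelpers

/-- (Bombieri–Pila / Heath-Brown type bound) Let `F ∈ ℤ[X₁, X₂]` be of total degree `d ≥ 1`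
and irreducible over `ℚ`, let `P₁, P₂ ≥ 1`, and let `T > 1` be the largest value of
`P₁^(e₁) · P₂^(e₂)` over all monomials `X₁^(e₁)X₂^(e₂)` occurring in `F` with nonzero
coefficient. Then the number of integer zeros `(x₁, x₂)` of `F` with `|x₁| ≤ P₁`, `|x₂| ≤ P₂`
is at most `O_{d,ε}(max(P₁,P₂)^ε · exp(log P₁ · log P₂ / log T))`. -/
theorem count_integral_points_on_curve (d : ℕ) (hd : 1 ≤ d) (ε : ℝ) (hε : 0 < ε) :
    ∃ C : ℝ, ∀ F : MvPolynomial (Fin 2) ℤ,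
      F.totalDegree = d →
      Irreducible (MvPolynomial.map (Int.castRingHom ℚ) F) →
      ∀ P₁ P₂ : ℝ, 1 ≤ P₁ → 1 ≤ P₂ →
      ∀ T : ℝ, 1 < T →
        IsGreatest {x : ℝ | ∃ e ∈ F.support, x = P₁ ^ (e 0) * P₂ ^ (e 1)} T →
        (Set.ncard {x : ℤ × ℤ |
            MvPolynomial.eval (fun i => if i = 0 then x.1 else x.2) F = 0 ∧
            (|x.1| : ℝ) ≤ P₁ ∧ (|x.2| : ℝ) ≤ P₂} : ℝ)
          ≤ C * (max P₁ P₂) ^ ε * Real.exp (Real.log P₁ * Real.log P₂ / Real.log T) := by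
  obtain ⟨C, hC⟩ := bm_final d hd ε hε
  refine ⟨C, ?_⟩
  intro F hFd hF P₁ P₂ hP₁ hP₂ T hT hTg
  set A := {x : ℤ × ℤ |
            MvPolynomial.eval (fun i => if i = 0 then x.1 else x.2) F = 0 ∧
            (|x.1| : ℝ) ≤ P₁ ∧ (|x.2| : ℝ) ≤ P₂} with hA
  have hfin : A.Finite := by
    refine (Set.finite_Icc ((-⌊P₁⌋, -⌊P₂⌋) : ℤ × ℤ) (⌊P₁⌋, ⌊P₂⌋)).subset ?_
    rintro ⟨x, y⟩ ⟨_, hx, hy⟩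
    have hx' := abs_le.mp hx
    have hy' := abs_le.mp hy
    have h1 : -x ≤ ⌊P₁⌋ := Int.le_floor.mpr (by push_cast; linarith [hx'.1])
    have h2 : -y ≤ ⌊P₂⌋ := Int.le_floor.mpr (by push_cast; linarith [hy'.1])
    have h3 : x ≤ ⌊P₁⌋ := Int.le_floor.mpr hx'.2
    have h4 : y ≤ ⌊P₂⌋ := Int.le_floor.mpr hy'.2
    exact ⟨⟨by simp; linarith, by simp; linarith⟩, ⟨h3, h4⟩⟩
  have hinj : Function.Injective (fun x : ℤ × ℤ => (fun i : Fin 2 => if i = 0 then x.1 else x.2)) := by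
    intro x y hxy
    have h0 := congrFun hxy 0
    have h1 := congrFun hxy 1
    simp at h0 h1
    exact Prod.ext h0 h1
  have key := hC F hFd hF (fun i => if i = 0 then P₁ else P₂)
    (by intro i; split_ifs <;> assumption) T hT (by simpa using hTg)
    (hfin.toFinset.image (fun x : ℤ × ℤ => (fun i : Fin 2 => if i = 0 then x.1 else x.2)))
    (by
      intro z hz
      obtain ⟨x, hx, rfl⟩ := Finset.mem_image.mp hz
      exact ((hfin.mem_toFinset).mp hx).1)
    (by
      intro z hz i
      obtain ⟨x, hx, rfl⟩ := Finset.mem_image.mp hz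
      have := ((hfin.mem_toFinset).mp hx).2
      dsimp only
      split_ifs
      · exact this.1
      · exact this.2)
  rw [Finset.card_image_of_injective _ hinj, ← Set.ncard_eq_toFinset_card A hfin] at key
  simpa using key
end

section
/- Let n ≥ 2 be an integer and ε > 0. Then there exists a constant C, depending only on n and ε, such that for every real H ≥ 1 the number of tuples (a_1, …, a_n) ∈ ℤ^n with |a_i| ≤ H for 1 ≤ i ≤ n such that the Galois group of the splitting field of X^n + a_1X^{n-1} + ⋯ + a_n over ℚ is not isomorphic to S_n is at most C·H^{n-1/2+ε}. -/
open Polynomial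

theorem gs_jordan {G : Type*} [Group G] [Finite G] (K : Subgroup G)
    (h : ∀ g : G, ∃ c : G, c⁻¹ * g * c ∈ K) : K = ⊤ := by
  classical
  have := Fintype.ofFinite G
  have hb := MulAction.sum_card_fixedBy_eq_card_orbits_mul_card_group G (G ⧸ K)
  have h1 : Fintype.card (MulAction.orbitRel.Quotient G (G ⧸ K)) = 1 := by
    rw [Fintype.card_eq_one_iff_nonempty_unique]
    have := MulAction.pretransitive_iff_unique_quotient_of_nonempty G (G ⧸ K)
    exact this.1 inferInstance
  rw [h1, one_mul] at hb
  have hge : ∀ g : G, 1 ≤ Fintype.card (MulAction.fixedBy (G ⧸ K) g) := by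
    intro g
    obtain ⟨c, hc⟩ := h g
    apply Fintype.card_pos_iff.2
    refine ⟨⟨(c : G ⧸ K), ?_⟩⟩
    rw [MulAction.mem_fixedBy, MulAction.Quotient.smul_coe, smul_eq_mul, eq_comm, QuotientGroup.eq]
    simpa [mul_assoc] using hc
  have heq : ∀ g ∈ (Finset.univ : Finset G), 1 = Fintype.card (MulAction.fixedBy (G ⧸ K) g) := by
    rw [← Finset.sum_eq_sum_iff_of_le (fun g _ => hge g), hb]
    simp
  have h2 := heq 1 (Finset.mem_univ _)
  have h3 : Subsingleton (G ⧸ K) := by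
    have h4 : Fintype.card (MulAction.fixedBy (G ⧸ K) (1 : G)) ≤ 1 := h2.symm.le
    rw [Fintype.card_le_one_iff_subsingleton] at h4
    constructor
    intro a b
    have := h4.elim ⟨a, by simp⟩ ⟨b, by simp⟩
    simpa using this
  exact QuotientGroup.subsingleton_iff.1 h3 

/-- The sieve weight. -/
noncomputable def gsW (M l : ℕ) (a : ℕ) : ℝ :=
  ‖∑ j ∈ Finset.range l, Complex.exp (2 * Real.pi * Complex.I / M) ^ (a * j)‖ ^ 2

theorem gsW_class (m M' l r : ℕ) (hm : 0 < m) (hM : 0 < M') (hl : l ≤ M') :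
    ∑ s ∈ Finset.range M', gsW (m * M') l (r + m * s) = l * M' := by
  have hprim := Complex.isPrimitiveRoot_exp (m * M') (by positivity)
  set ζ := Complex.exp (2 * Real.pi * Complex.I / (m * M' : ℕ)) with hζ
  have hn : ‖ζ‖ = 1 := hprim.norm'_eq_one (by positivity)
  have hz0 : ζ ≠ 0 := hprim.ne_zero (by positivity)
  have hinv : (starRingEnd ℂ) ζ = ζ⁻¹ := (Complex.inv_eq_conj hn).symm
  have hprim' : IsPrimitiveRoot (ζ ^ m) M' := hprim.pow (by positivity) rfl
  have key : ∀ j ∈ Finset.range l, ∀ k ∈ Finset.range l,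
      ∑ s ∈ Finset.range M', ζ ^ ((r + m * s) * j) * (ζ⁻¹) ^ ((r + m * s) * k)
        = if j = k then (M' : ℂ) else 0 := by
    intro j hj k hk
    have hj' := Finset.mem_range.1 hj
    have hk' := Finset.mem_range.1 hk
    split_ifs with hjk
    · subst hjk
      simp only [← mul_pow, mul_inv_cancel₀ hz0]
      simp
    · have e : ∀ s, ζ ^ ((r + m * s) * j) * (ζ⁻¹) ^ ((r + m * s) * k)
          = (ζ ^ (r * j) * ζ⁻¹ ^ (r * k)) * ((ζ ^ m) ^ j * ((ζ ^ m) ^ k)⁻¹) ^ s := by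
        intro s
        simp only [← inv_pow, ← pow_mul, mul_pow, add_mul, pow_add]
        ring
      simp only [e]
      rw [← Finset.mul_sum]
      have hne : (ζ ^ m) ^ j * ((ζ ^ m) ^ k)⁻¹ ≠ 1 := by
        intro h
        have h0 : (ζ ^ m) ^ k ≠ 0 := by positivity
        rw [mul_inv_eq_one₀ h0] at h
        exact hjk (hprim'.pow_inj (by omega) (by omega) h)
      rw [geom_sum_eq hne]
      have : ((ζ ^ m) ^ j * ((ζ ^ m) ^ k)⁻¹) ^ M' = 1 := by
        rw [mul_pow, inv_pow, ← pow_mul, ← pow_mul (ζ ^ m) k, mul_comm j, mul_comm k, pow_mul, pow_mul _ M' k,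
          hprim'.pow_eq_one]
        simp
      rw [this]; simp
  have hW : ∀ a, ((gsW (m * M') l a : ℝ) : ℂ) =
      ∑ j ∈ Finset.range l, ∑ k ∈ Finset.range l, ζ ^ (a * j) * (ζ⁻¹) ^ (a * k) := by
    intro a
    unfold gsW
    rw [← hζ]
    push_cast
    rw [← Complex.mul_conj', map_sum, Finset.sum_mul_sum]
    simp [hinv]
  have : ((∑ s ∈ Finset.range M', gsW (m * M') l (r + m * s) : ℝ) : ℂ) = l * M' := by
    push_cast
    simp only [hW]
    rw [Finset.sum_comm]
    simp_rw [Finset.sum_comm (s := Finset.range M')]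
    rw [Finset.sum_congr rfl fun j hj => Finset.sum_congr rfl fun k hk => key j hj k hk]
    simp
    rw [Finset.sum_congr rfl (g := fun _ => (M' : ℂ))]
    · simp
    · intro j hj; simp [Finset.mem_range.1 hj]
  exact_mod_cast this

theorem gsW_class' (m M l r : ℕ) (hm : m ∣ M) (hM : 0 < M) (hr : r < m) (hl : l * m ≤ M) :
    ∑ a ∈ (Finset.range M).filter (fun a => a % m = r), gsW M l a = (l * M : ℝ) / m := by
  obtain ⟨M', rfl⟩ := hm
  have hm0 : 0 < m := by omega
  have hM' : 0 < M' := by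
    rcases Nat.eq_zero_or_pos M' with h | h
    · simp [h] at hM
    · exact h
  have hl' : l ≤ M' := by
    rw [mul_comm m] at hl
    exact Nat.le_of_mul_le_mul_right hl hm0
  have h1 := gsW_class m M' l r hm0 hM' hl'
  have h2 : (Finset.range (m * M')).filter (fun a => a % m = r)
      = (Finset.range M').image (fun s => r + m * s) := by
    ext a
    simp only [Finset.mem_filter, Finset.mem_range, Finset.mem_image]
    constructor
    · rintro ⟨h, h'⟩
      refine ⟨a / m, Nat.div_lt_of_lt_mul h, ?_⟩
      rw [← h']; exact Nat.mod_add_div a m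
    · rintro ⟨s, hs, rfl⟩
      refine ⟨?_, by simp [Nat.mod_eq_of_lt hr]⟩
      calc r + m * s < m + m * s := by omega
        _ = m * (s + 1) := by ring
        _ ≤ m * M' := Nat.mul_le_mul_left _ hs
  rw [h2, Finset.sum_image, h1]
  · push_cast; field_simp
  · intro s _ t _ h
    simp only at h
    have : m * s = m * t := by omega
    exact Nat.eq_of_mul_eq_mul_left hm0 this

theorem gsW_lower (M l a : ℕ) (hM : 0 < M) (h : 6 * (a * l) ≤ M) : (l : ℝ) ^ 2 / 4 ≤ gsW M l a := by
  unfold gsW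
  have hre : (l : ℝ) / 2 ≤
      (∑ j ∈ Finset.range l, Complex.exp (2 * Real.pi * Complex.I / M) ^ (a * j)).re := by
    rw [Complex.re_sum]
    have : ∀ j ∈ Finset.range l, (1 / 2 : ℝ) ≤ (Complex.exp (2 * Real.pi * Complex.I / M) ^ (a * j)).re := by
      intro j hj
      have hj' := Finset.mem_range.1 hj
      have e : Complex.exp (2 * Real.pi * Complex.I / M) ^ (a * j)
          = Complex.exp ((2 * Real.pi * (a * j) / M : ℝ) * Complex.I) := by
        rw [← Complex.exp_nat_mul]
        congr 1
        push_cast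
        ring
      rw [e, Complex.exp_ofReal_mul_I_re, ← Real.cos_pi_div_three]
      have hM' : (0 : ℝ) < M := by exact_mod_cast hM
      have hb : (6 * ((a : ℝ) * j)) ≤ M := by
        have : 6 * (a * j) ≤ M := le_trans (by gcongr) h
        exact_mod_cast this
      apply Real.cos_le_cos_of_nonneg_of_le_pi
      · positivity
      · linarith [Real.pi_pos]
      · rw [div_le_div_iff₀ hM' (by norm_num)]
        nlinarith [Real.pi_pos]
    calc (l : ℝ) / 2 = ∑ j ∈ Finset.range l, (1 / 2 : ℝ) := by simp; ring
      _ ≤ _ := Finset.sum_le_sum this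
  have h2 := hre.trans (Complex.re_le_norm _)
  calc (l : ℝ) ^ 2 / 4 = ((l : ℝ) / 2) ^ 2 := by ring
    _ ≤ _ := by gcongr

theorem gsWn_class (n m M l : ℕ) (r : Fin n → ℕ) (hm : m ∣ M) (hM : 0 < M) (hr : ∀ i, r i < m)
    (hl : l * m ≤ M) :
    ∑ a ∈ (Fintype.piFinset fun _ : Fin n => Finset.range M).filter (fun a => ∀ i, a i % m = r i),
      ∏ i, gsW M l (a i) = ((l * M : ℝ) / m) ^ n := by
  have h : (Fintype.piFinset fun _ : Fin n => Finset.range M).filter (fun a => ∀ i, a i % m = r i)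
      = Fintype.piFinset fun i : Fin n => (Finset.range M).filter (fun a => a % m = r i) := by
    ext a
    simp [Fintype.mem_piFinset, forall_and]
  rw [h, ← Finset.prod_univ_sum (fun i : Fin n => (Finset.range M).filter (fun a => a % m = r i))
    (fun _ a => gsW M l a)]
  rw [Finset.prod_congr rfl fun i _ => gsW_class' m M l (r i) hm hM (hr i) hl]
  rw [Finset.prod_const, Finset.card_univ, Fintype.card_fin]

open Classical in
theorem gs_E2 (n p q M l : ℕ) (hpq : p.Coprime q) (hm : p * q ∣ M) (hM : 0 < M)
    (hl : l * (p * q) ≤ M) (A : Finset (Fin n → ZMod p)) (B : Finset (Fin n → ZMod q)) :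
    ∑ a ∈ (Fintype.piFinset fun _ : Fin n => Finset.range M),
      (∏ i, gsW M l (a i)) * ((if (fun i => (a i : ZMod p)) ∈ A then 1 else 0) *
        (if (fun i => (a i : ZMod q)) ∈ B then 1 else 0)) =
      (A.card * B.card) * ((l * M : ℝ) / (p * q)) ^ n := by
  have hpq0 : 0 < p * q := Nat.pos_of_dvd_of_pos hm hM
  have hp0 : p ≠ 0 := by rintro rfl; simp at hpq0
  have hq0 : q ≠ 0 := by rintro rfl; simp at hpq0
  have : NeZero p := ⟨hp0⟩
  have : NeZero q := ⟨hq0⟩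
  have key : ∀ b : Fin n → ZMod p, ∀ c : Fin n → ZMod q,
      ∑ a ∈ (Fintype.piFinset fun _ : Fin n => Finset.range M),
      (∏ i, gsW M l (a i)) * ((if (fun i => (a i : ZMod p)) = b then 1 else 0) *
        (if (fun i => (a i : ZMod q)) = c then 1 else 0)) = ((l * M : ℝ) / (p * q)) ^ n := by
    intro b c
    have := gsWn_class n (p * q) M l
      (fun i => Nat.chineseRemainder hpq (b i).val (c i).val) hm hM
      (fun i => Nat.chineseRemainder_lt_mul hpq _ _ hp0 hq0) hl
    rw [Nat.cast_mul] at this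
    rw [← this, Finset.sum_filter]
    apply Finset.sum_congr rfl
    intro a _
    have hiff : (∀ i, a i % (p * q) = (Nat.chineseRemainder hpq (b i).val (c i).val : ℕ)) ↔
        ((fun i => (a i : ZMod p)) = b ∧ (fun i => (a i : ZMod q)) = c) := by
      rw [funext_iff, funext_iff, ← forall_and]
      apply forall_congr'
      intro i
      set z := Nat.chineseRemainder hpq (b i).val (c i).val with hz
      have hzlt : (z : ℕ) < p * q := Nat.chineseRemainder_lt_mul hpq _ _ hp0 hq0
      have e1 : ((a i : ZMod p) = b i) ↔ a i ≡ z [MOD p] := by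
        rw [← ZMod.natCast_eq_natCast_iff, (ZMod.natCast_eq_natCast_iff _ _ _).2 z.2.1]
        simp
      have e2 : ((a i : ZMod q) = c i) ↔ a i ≡ z [MOD q] := by
        rw [← ZMod.natCast_eq_natCast_iff, (ZMod.natCast_eq_natCast_iff _ _ _).2 z.2.2]
        simp
      rw [e1, e2, Nat.modEq_and_modEq_iff_modEq_mul hpq, Nat.ModEq, Nat.mod_eq_of_lt hzlt]
    by_cases h1 : (fun i => (a i : ZMod p)) = b
    · by_cases h2 : (fun i => (a i : ZMod q)) = c
      · rw [if_pos h1, if_pos h2, if_pos (hiff.2 ⟨h1, h2⟩)]; simp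
      · rw [if_neg h2, if_neg (fun h => h2 (hiff.1 h).2)]; simp
    · rw [if_neg h1, if_neg (fun h => h1 (hiff.1 h).1)]; simp
  calc _ = ∑ a ∈ (Fintype.piFinset fun _ : Fin n => Finset.range M), ∑ b ∈ A, ∑ c ∈ B,
        (∏ i, gsW M l (a i)) * ((if (fun i => (a i : ZMod p)) = b then 1 else 0) *
        (if (fun i => (a i : ZMod q)) = c then 1 else 0)) := by
        apply Finset.sum_congr rfl
        intro a _
        simp only [← Finset.mul_sum, ← Finset.sum_mul]
        simp
    _ = ∑ b ∈ A, ∑ c ∈ B, ((l * M : ℝ) / (p * q)) ^ n := by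
        rw [Finset.sum_comm]
        apply Finset.sum_congr rfl
        intro b _
        rw [Finset.sum_comm]
        exact Finset.sum_congr rfl fun c _ => key b c
    _ = _ := by simp; ring

theorem gs_sieve (n Q : ℕ) (P : Finset ℕ) (hP : ∀ p ∈ P, p.Prime ∧ p ≤ Q) (δ : ℝ) (hδ : 0 < δ)
    (Ω : ∀ p : ℕ, Finset (Fin n → ZMod p)) (hΩ : ∀ p ∈ P, δ * (p : ℝ) ^ n ≤ (Ω p).card)
    (A : Finset (Fin n → ℕ)) (hA : ∀ a ∈ A, ∀ i, 6 * a i ≤ Q ^ 2)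
    (hA' : ∀ a ∈ A, ∀ p ∈ P, (fun i => (a i : ZMod p)) ∉ Ω p) :
    (A.card : ℝ) * δ ^ 2 * P.card ≤ (4 * (Q : ℝ) ^ 2) ^ n := by
  classical
  rcases P.eq_empty_or_nonempty with rfl | ⟨p0, hp0⟩
  · simp
  have hQ : 0 < Q := (hP p0 hp0).1.pos.trans_le (hP p0 hp0).2
  have hPc : (0 : ℝ) < P.card := by exact_mod_cast Finset.card_pos.2 ⟨p0, hp0⟩
  set l := Q.factorial with hl
  set M := l * Q ^ 2 with hM
  have hl0 : 0 < l := Nat.factorial_pos Q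
  have hM0 : 0 < M := by positivity
  set box := (Fintype.piFinset fun _ : Fin n => Finset.range M) with hbox
  set W : (Fin n → ℕ) → ℝ := fun a => ∏ i, gsW M l (a i) with hW
  have hW0 : ∀ a, 0 ≤ W a := fun a => Finset.prod_nonneg fun i _ => by unfold gsW; positivity
  set T : ℝ := (l * M : ℝ) ^ n with hT
  have hT0 : 0 < T := by positivity
  set I : ℕ → (Fin n → ℕ) → ℝ := fun p a => if (fun i => (a i : ZMod p)) ∈ Ω p then 1 else 0 with hI
  set ω : ℕ → ℝ := fun p => (Ω p).card / (p : ℝ) ^ n with hω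
  have hpos : ∀ p ∈ P, (0 : ℝ) < p := fun p hp => by exact_mod_cast (hP p hp).1.pos
  have hωδ : ∀ p ∈ P, δ ≤ ω p := fun p hp => by
    have := hpos p hp
    rw [hω, le_div_iff₀ (by positivity)]
    exact hΩ p hp
  have hω1 : ∀ p ∈ P, ω p ≤ 1 := fun p hp => by
    have := hpos p hp
    have : Fact p.Prime := ⟨(hP p hp).1⟩
    rw [hω, div_le_one (by positivity)]
    have := Finset.card_le_univ (Ω p)
    simp at this
    exact_mod_cast this
  have hdvd : ∀ p ∈ P, p ∣ M := fun p hp =>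
    ((hP p hp).1.dvd_factorial.2 (hP p hp).2).mul_right _
  have E0 : ∑ a ∈ box, W a = T := by
    have := gs_E2 n 1 1 M l (by simp) (by simp) hM0 (by rw [hM]; nlinarith [pow_pos hQ 2])
      Finset.univ Finset.univ
    simp only [Finset.mem_univ, if_true] at this
    simpa using this
  have E1 : ∀ p ∈ P, ∑ a ∈ box, W a * I p a = ω p * T := by
    intro p hp
    have := gs_E2 n p 1 M l (by simp) (by simpa using hdvd p hp) hM0
      (by rw [hM, mul_one]; gcongr; exact (hP p hp).2.trans (Nat.le_self_pow (by norm_num) _))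
      (Ω p) Finset.univ
    simp only [Finset.mem_univ, if_true] at this
    have h2 : ∑ a ∈ box, W a * I p a = (Ω p).card * (l * M / p : ℝ) ^ n := by
      simpa [hI, hbox, hW] using this
    rw [h2, div_pow, hω, hT]
    ring
  have E2 : ∀ p ∈ P, ∀ q ∈ P, p ≠ q → ∑ a ∈ box, W a * (I p a * I q a) = ω p * ω q * T := by
    intro p hp q hq hne
    have hc := (Nat.coprime_primes (hP p hp).1 (hP q hq).1).2 hne
    have := gs_E2 n p q M l hc (hc.mul_dvd_of_dvd_of_dvd (hdvd p hp) (hdvd q hq)) hM0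
      (by rw [hM, sq]; gcongr; exacts [(hP p hp).2, (hP q hq).2])
      (Ω p) (Ω q)
    rw [this, div_pow, mul_pow (p : ℝ)]
    simp only [hω, hT]
    have := hpos p hp
    have := hpos q hq
    field_simp
  have off : ∀ p ∈ P, ∀ q ∈ P, p ≠ q → ∑ a ∈ box, W a * ((I p a - ω p) * (I q a - ω q)) = 0 := by
    intro p hp q hq hne
    have e : ∀ a, W a * ((I p a - ω p) * (I q a - ω q)) = W a * (I p a * I q a)
      - ω q * (W a * I p a) - ω p * (W a * I q a) + ω p * ω q * W a := fun a => by ring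
    simp only [e, Finset.sum_add_distrib, Finset.sum_sub_distrib, ← Finset.mul_sum]
    rw [E2 p hp q hq hne, E1 p hp, E1 q hq, E0]
    ring
  have diag : ∀ p ∈ P, ∑ a ∈ box, W a * ((I p a - ω p) * (I p a - ω p)) ≤ T := by
    intro p hp
    rw [← E0]
    apply Finset.sum_le_sum
    intro a _
    have h0 := hδ.le.trans (hωδ p hp)
    have h1 := hω1 p hp
    have : (I p a - ω p) * (I p a - ω p) ≤ 1 := by
      simp only [hI]
      split_ifs <;> nlinarith
    nlinarith [hW0 a]
  have var : ∑ a ∈ box, W a * (∑ p ∈ P, (I p a - ω p)) ^ 2 ≤ P.card * T := by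
    calc _ = ∑ p ∈ P, ∑ q ∈ P, ∑ a ∈ box, W a * ((I p a - ω p) * (I q a - ω q)) := by
          simp only [sq, Finset.sum_mul_sum]
          simp only [Finset.mul_sum]
          rw [Finset.sum_comm]
          apply Finset.sum_congr rfl
          intro p _
          rw [Finset.sum_comm]
      _ = ∑ p ∈ P, ∑ a ∈ box, W a * ((I p a - ω p) * (I p a - ω p)) := by
          apply Finset.sum_congr rfl
          intro p hp
          rw [Finset.sum_eq_single_of_mem p hp]
          intro q hq hne
          exact off p hp q hq hne.symm
      _ ≤ ∑ p ∈ P, T := Finset.sum_le_sum diag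
      _ = _ := by simp
  have hsub : A ⊆ box := by
    intro a ha
    rw [hbox, Fintype.mem_piFinset]
    intro i
    rw [Finset.mem_range]
    have h1 := hA a ha i
    have h2 : Q ^ 2 ≤ M := by rw [hM]; exact Nat.le_mul_of_pos_left _ hl0
    have h3 : 0 < Q ^ 2 := by positivity
    omega
  have low : ∀ a ∈ A, ((l : ℝ) ^ 2 / 4) ^ n * (δ * P.card) ^ 2 ≤ W a * (∑ p ∈ P, (I p a - ω p)) ^ 2 := by
    intro a ha
    have h1 : ((l : ℝ) ^ 2 / 4) ^ n ≤ W a := by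
      calc ((l : ℝ) ^ 2 / 4) ^ n = ∏ i : Fin n, ((l : ℝ) ^ 2 / 4) := by
            rw [Finset.prod_const, Finset.card_univ, Fintype.card_fin]
        _ ≤ _ := by
          apply Finset.prod_le_prod
          · intros; positivity
          · intro i _
            apply gsW_lower _ _ _ hM0
            rw [hM]
            nlinarith [hA a ha i]
    have h2 : δ * P.card ≤ -(∑ p ∈ P, (I p a - ω p)) := by
      rw [← Finset.sum_neg_distrib]
      calc δ * P.card = ∑ p ∈ P, δ := by simp; ring
        _ ≤ _ := by
          apply Finset.sum_le_sum
          intro p hp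
          have : I p a = 0 := by simp only [hI]; rw [if_neg (hA' a ha p hp)]
          rw [this]; linarith [hωδ p hp]
    have h3 : (δ * P.card) ^ 2 ≤ (∑ p ∈ P, (I p a - ω p)) ^ 2 := by
      rw [← neg_sq (∑ p ∈ P, (I p a - ω p))]
      gcongr
    gcongr
    exact hW0 a
  have fin1 : (A.card : ℝ) * (((l : ℝ) ^ 2 / 4) ^ n * (δ * P.card) ^ 2) ≤ P.card * T := by
    calc _ = ∑ a ∈ A, (((l : ℝ) ^ 2 / 4) ^ n * (δ * P.card) ^ 2) := by simp
      _ ≤ ∑ a ∈ A, W a * (∑ p ∈ P, (I p a - ω p)) ^ 2 := Finset.sum_le_sum low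
      _ ≤ ∑ a ∈ box, W a * (∑ p ∈ P, (I p a - ω p)) ^ 2 :=
        Finset.sum_le_sum_of_subset_of_nonneg hsub fun a _ _ => mul_nonneg (hW0 a) (sq_nonneg _)
      _ ≤ _ := var
  have hTe : T = ((l : ℝ) ^ 2 / 4) ^ n * (4 * (Q : ℝ) ^ 2) ^ n := by
    rw [hT, ← mul_pow, hM]; push_cast; ring
  have hlp : (0 : ℝ) < ((l : ℝ) ^ 2 / 4) ^ n := by positivity
  rw [hTe] at fin1
  have : (((l : ℝ) ^ 2 / 4) ^ n * P.card) * ((A.card : ℝ) * δ ^ 2 * P.card)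
      ≤ (((l : ℝ) ^ 2 / 4) ^ n * P.card) * (4 * (Q : ℝ) ^ 2) ^ n := by
    calc _ = (A.card : ℝ) * (((l : ℝ) ^ 2 / 4) ^ n * (δ * P.card) ^ 2) := by ring
      _ ≤ _ := fin1
      _ = _ := by ring
  exact le_of_mul_le_mul_left this (by positivity)

open NumberField in
theorem gs_frob (K : Type*) [Field K] [NumberField K] [IsGalois ℚ K] (p : ℕ) [hp : Fact p.Prime] :
    ∃ (φ : 𝓞 K →+* AlgebraicClosure (ZMod p)) (σ : K ≃ₐ[ℚ] K),
      ∀ x : 𝓞 K, φ (σ • x) = φ x ^ p := by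
  obtain ⟨Q, hQm, hQ⟩ := Ideal.exists_maximal_ideal_liesOver_of_isIntegral (S := 𝓞 K) (Ideal.span {(p : ℤ)})
  have hun : Q.under ℤ = Ideal.span {(p : ℤ)} := hQ.over.symm
  have hcard : Nat.card (ℤ ⧸ Q.under ℤ) = p := by
    rw [hun]
    simpa using Int.card_ideal_quot p
  obtain ⟨σ, hσ⟩ := IsArithFrobAt.exists_of_isInvariant ℤ (K ≃ₐ[ℚ] K) Q
  let := Ideal.Quotient.field Q
  have : CharP (𝓞 K ⧸ Q) p := by
    have h : ((p : ℕ) : 𝓞 K ⧸ Q) = 0 := by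
      have h1 : (p : ℤ) ∈ Q.under ℤ := by rw [hun]; exact Ideal.mem_span_singleton_self _
      have h2 : algebraMap ℤ (𝓞 K) p ∈ Q := h1
      have h3 := Ideal.Quotient.eq_zero_iff_mem.2 h2
      simpa using h3
    exact (CharP.charP_iff_prime_eq_zero hp.out).2 h
  let := ZMod.algebra (𝓞 K ⧸ Q) p
  let ψ : (𝓞 K ⧸ Q) →ₐ[ZMod p] AlgebraicClosure (ZMod p) := IsAlgClosed.lift
  refine ⟨ψ.toRingHom.comp (Ideal.Quotient.mk Q), σ, fun x => ?_⟩
  have := hσ.mk_apply x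
  rw [hcard] at this
  have h2 := congrArg ψ this
  rw [map_pow] at h2
  exact h2

theorem gs_exists_roots {K : Type*} [Field K] (n : ℕ) (g : K[X]) (hg : g.Monic) (hd : g.natDegree = n)
    (hs : g.Splits) : ∃ α : Fin n → K, g = ∏ i, (X - C (α i)) := by
  have hc : g.roots.toList.length = n := by
    rw [Multiset.length_toList, ← hd]; exact hs.natDegree_eq_card_roots.symm
  subst hc
  refine ⟨fun i => g.roots.toList.get i, ?_⟩
  conv_lhs => rw [hs.eq_prod_roots_of_monic hg, ← Multiset.coe_toList g.roots]
  have h : List.ofFn (fun i => X - C (g.roots.toList.get i)) = g.roots.toList.map (fun x => X - C x) := by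
    conv_rhs => rw [← List.ofFn_get g.roots.toList]
    rw [List.map_ofFn]
    rfl
  rw [Multiset.map_coe, Multiset.prod_coe, ← List.prod_ofFn, h]

/-- Labelled roots with an automorphism acting as the given permutation. -/
def gsHasType (n : ℕ) (f : ℚ[X]) (K : Type) [Field K] [Algebra ℚ K] (π : Equiv.Perm (Fin n)) : Prop :=
  ∃ α : Fin n → K, Function.Injective α ∧ f.map (algebraMap ℚ K) = ∏ i, (X - C (α i)) ∧
    ∃ σ : K ≃ₐ[ℚ] K, ∀ i, σ (α i) = α (π i)

theorem gs_root_iff {R : Type*} [CommRing R] [IsDomain R] {n : ℕ} (x : Fin n → R) (r : R) :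
    (∏ i, (X - C (x i))).eval r = 0 ↔ ∃ i, x i = r := by
  rw [eval_prod, Finset.prod_eq_zero_iff]
  simp [sub_eq_zero, eq_comm]

open NumberField in
theorem gs_dedekind (n : ℕ) (f : ℤ[X]) (hf : f.Monic) (hd : f.natDegree = n) (K : Type) [Field K]
    [NumberField K] [IsGalois ℚ K] (hs : (f.map (algebraMap ℤ K)).Splits)
    (p : ℕ) [hp : Fact p.Prime] (π : Equiv.Perm (Fin n)) (x : Fin n → AlgebraicClosure (ZMod p))
    (hx : Function.Injective x) (hxp : ∀ i, x i ^ p = x (π i))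
    (hfx : f.map (Int.castRingHom _) = ∏ i, (X - C (x i))) :
    gsHasType n (f.map (Int.castRingHom ℚ)) K π := by
  obtain ⟨φ, σ, hσ⟩ := gs_frob K p
  obtain ⟨α, hα⟩ := gs_exists_roots n (f.map (algebraMap ℤ K)) (hf.map _)
    (by rw [hf.natDegree_map, hd]) hs
  have hintegral : ∀ i, IsIntegral ℤ (α i) := by
    intro i
    refine ⟨f, hf, ?_⟩
    rw [← eval_map, hα, gs_root_iff]
    exact ⟨i, rfl⟩
  let β : Fin n → 𝓞 K := fun i => ⟨α i, hintegral i⟩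
  have hβα : ∀ i, algebraMap (𝓞 K) K (β i) = α i := fun i => rfl
  have hβ : f.map (algebraMap ℤ (𝓞 K)) = ∏ i, (X - C (β i)) := by
    apply map_injective (algebraMap (𝓞 K) K) (FaithfulSMul.algebraMap_injective _ _)
    rw [map_map, ← IsScalarTower.algebraMap_eq, hα, Polynomial.map_prod]
    simp [hβα]
  have hφ : ∏ i, (X - C (x i)) = ∏ i, (X - C (φ (β i))) := by
    have : (f.map (algebraMap ℤ (𝓞 K))).map φ = f.map (Int.castRingHom _) := by
      rw [map_map]; congr 1; exact RingHom.ext_int _ _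
    rw [← hfx, ← this, hβ, Polynomial.map_prod]
    simp
  have hex : ∀ i, ∃ j, φ (β j) = x i := by
    intro i
    rw [← gs_root_iff (fun j => φ (β j)), ← hφ, gs_root_iff]
    exact ⟨i, rfl⟩
  choose e he using hex
  have hei : Function.Injective e := by
    intro i j hij
    apply hx
    rw [← he, ← he, hij]
  have heb : Function.Bijective e := Finite.injective_iff_bijective.1 hei
  have hbi : Function.Injective fun i => β (e i) := by
    intro i j hij
    apply hx
    simp only at hij
    rw [← he, ← he, hij]
  refine ⟨fun i => algebraMap (𝓞 K) K (β (e i)),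
    (FaithfulSMul.algebraMap_injective (𝓞 K) K).comp hbi, ?_, σ, ?_⟩
  · rw [map_map, RingHom.ext_int ((algebraMap ℚ K).comp (Int.castRingHom ℚ)) (algebraMap ℤ K), hα]
    exact (Function.Bijective.prod_comp heb (fun i => X - C (α i))).symm
  · intro i
    have h1 : ∃ j, β j = σ • β (e i) := by
      rw [← gs_root_iff, ← hβ]
      have h2 : eval (β (e i)) (f.map (algebraMap ℤ (𝓞 K))) = 0 := by
        rw [hβ, gs_root_iff]; exact ⟨_, rfl⟩
      rw [eval_map_algebraMap] at h2 ⊢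
      have := Polynomial.aeval_algHom_apply (MulSemiringAction.toAlgHom ℤ (𝓞 K) σ) (β (e i)) f
      rw [h2, map_zero] at this
      exact this
    obtain ⟨j, hj⟩ := h1
    obtain ⟨k, rfl⟩ := heb.2 j
    have h3 : k = π i := by
      apply hx
      rw [← hxp, ← he k, ← he i, ← hσ, hj]
    subst h3
    have := congrArg (algebraMap (𝓞 K) K) hj
    exact this.symm

theorem gs_iso (n : ℕ) (f : ℚ[X]) (h : ∀ π, gsHasType n f f.SplittingField π) :
    Nonempty (f.Gal ≃* Equiv.Perm (Fin n)) := by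
  classical
  obtain ⟨α, hα, hf, -⟩ := h 1
  have hf0 : f ≠ 0 := by
    rintro rfl
    have : (∏ i, (X - C (α i))).Monic := monic_prod_of_monic _ _ fun i _ => monic_X_sub_C _
    rw [← hf, Polynomial.map_zero] at this
    exact not_monic_zero this
  have hroot : ∀ β : Fin n → f.SplittingField, f.map (algebraMap ℚ f.SplittingField) = ∏ i, (X - C (β i)) →
      ∀ r, r ∈ f.rootSet f.SplittingField ↔ ∃ i, β i = r := by
    intro β hβ r
    rw [mem_rootSet_of_ne hf0, ← eval_map_algebraMap, hβ, gs_root_iff]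
  have hfact : Fact ((f.map (algebraMap ℚ f.SplittingField)).Splits) := ⟨SplittingField.splits f⟩
  have mk : ∀ β : Fin n → f.SplittingField, Function.Injective β →
      f.map (algebraMap ℚ f.SplittingField) = ∏ i, (X - C (β i)) →
      ∃ e : Fin n ≃ f.rootSet f.SplittingField, ∀ i, (e i : f.SplittingField) = β i := by
    intro β hβ hfβ
    refine ⟨Equiv.ofBijective (fun i => ⟨β i, (hroot β hfβ _).2 ⟨i, rfl⟩⟩) ⟨?_, ?_⟩, fun i => rfl⟩
    · intro i j hij
      exact hβ (congrArg Subtype.val hij)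
    · rintro ⟨r, hr⟩
      obtain ⟨i, hi⟩ := (hroot β hfβ r).1 hr
      exact ⟨i, Subtype.ext hi⟩
  obtain ⟨e, he⟩ := mk α hα hf
  let Φ : f.Gal →* Equiv.Perm (Fin n) :=
    (e.symm.permCongrHom.toMonoidHom).comp (Gal.galActionHom f f.SplittingField)
  have hinj : Function.Injective Φ :=
    e.symm.permCongrHom.injective.comp (Gal.galActionHom_injective f f.SplittingField)
  have hsurj : Φ.range = ⊤ := by
    apply gs_jordan
    intro π
    obtain ⟨β, hβ, hfβ, σ, hσ⟩ := h π
    obtain ⟨e', he'⟩ := mk β hβ hfβ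
    refine ⟨e.trans e'.symm, Gal.restrict f f.SplittingField σ, ?_⟩
    ext1 i
    have h1 : Φ (Gal.restrict f f.SplittingField σ) i
        = e.symm (Gal.galActionHom f f.SplittingField (Gal.restrict f f.SplittingField σ) (e i)) := rfl
    have h2 : ((e.trans e'.symm : Equiv.Perm (Fin n))⁻¹ * π * (e.trans e'.symm : Equiv.Perm (Fin n))) i
        = e.symm (e' (π (e'.symm (e i)))) := rfl
    rw [h1, h2]
    congr 1
    apply Subtype.ext
    rw [Gal.galActionHom_restrict, he', ← hσ, ← he', Equiv.apply_symm_apply]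
  exact ⟨MulEquiv.ofBijective Φ ⟨hinj, MonoidHom.range_eq_top.1 hsurj⟩⟩

/-- The polynomial with coefficient vector `a`. -/
noncomputable def gsP {R : Type*} [CommRing R] (n : ℕ) (a : Fin n → R) : R[X] :=
  X ^ n + ∑ i : Fin n, C (a i) * X ^ (n - 1 - (i : ℕ))

theorem gsP_map {R S : Type*} [CommRing R] [CommRing S] (φ : R →+* S) (n : ℕ) (a : Fin n → R) :
    (gsP n a).map φ = gsP n (fun i => φ (a i)) := by
  simp [gsP, Polynomial.map_sum]

theorem gsP_deg {R : Type*} [CommRing R] [Nontrivial R] (n : ℕ) (a : Fin n → R) :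
    (gsP n a).Monic ∧ (gsP n a).natDegree = n := by
  have h : (∑ i : Fin n, C (a i) * X ^ (n - 1 - (i : ℕ))).degree < (n : WithBot ℕ) := by
    rw [degree_lt_iff_coeff_zero]
    intro m hm
    rw [finsetSum_coeff]
    apply Finset.sum_eq_zero
    intro i _
    rw [coeff_C_mul, coeff_X_pow, if_neg, mul_zero]
    have := i.2
    omega
  refine ⟨monic_X_pow_add h, ?_⟩
  have h2 : (gsP n a).degree = n := by
    unfold gsP
    rw [degree_add_eq_left_of_degree_lt]
    · exact degree_X_pow n
    · rwa [degree_X_pow]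
  exact natDegree_eq_of_degree_eq_some h2

theorem gsP_of_monic {R : Type*} [CommRing R] (n : ℕ) (g : R[X]) (hg : g.Monic)
    (hd : g.natDegree = n) : gsP n (fun i : Fin n => g.coeff (n - 1 - (i : ℕ))) = g := by
  conv_rhs => rw [hg.as_sum, hd]
  unfold gsP
  rw [← Finset.sum_range_reflect, ← Finset.sum_range
    (fun i => C (g.coeff (n - 1 - i)) * X ^ (n - 1 - i))]

/-- The Frobenius-twisted form. -/
def gsV (p : ℕ) [Fact p.Prime] (L : Type) [Field L] [Algebra (ZMod p) L] (n : ℕ)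
    (π : Equiv.Perm (Fin n)) : Submodule (ZMod p) (Fin n → L) where
  carrier := {x | ∀ i, x i ^ p = x (π i)}
  zero_mem' := by
    intro i
    simp [(Fact.out : p.Prime).ne_zero]
  add_mem' := by
    intro x y hx hy i
    have : CharP L p := charP_of_injective_algebraMap (algebraMap (ZMod p) L).injective p
    simp only [Pi.add_apply]
    rw [add_pow_char, hx i, hy i]
  smul_mem' := by
    intro c x hx i
    simp only [Pi.smul_apply]
    rw [_root_.smul_pow, ZMod.pow_card, hx i]

theorem gsV_dual (p : ℕ) [hp : Fact p.Prime] (L : Type) [Field L] [Algebra (ZMod p) L] [Fintype L] (n m : ℕ)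
    (π : Equiv.Perm (Fin n)) (hm : 0 < m) (hπ : π ^ m = 1) (hL : Fintype.card L = p ^ m)
    (lam : Fin n → L) (h : ∀ x ∈ gsV p L n π, ∑ i, lam i * x i = 0) : lam = 0 := by
  classical
  have : CharP L p := charP_of_injective_algebraMap (algebraMap (ZMod p) L).injective p
  let T : (Fin n → L) → (Fin n → L) := fun y i =>
    ∑ k ∈ Finset.range m, y ((π⁻¹ ^ k) i) ^ p ^ k
  have hT : ∀ y, T y ∈ gsV p L n π := by
    intro y i
    simp only [T]
    rw [sum_pow_char]
    have e : ∀ k, (y ((π⁻¹ ^ k) i) ^ p ^ k) ^ p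
        = (fun k => y ((π⁻¹ ^ k) (π i)) ^ p ^ k) (k + 1) := by
      intro k
      simp only
      rw [← pow_mul, ← pow_succ, pow_succ (π⁻¹), Equiv.Perm.mul_apply]
      simp
    rw [Finset.sum_congr rfl fun k _ => e k]
    have h1 := Finset.sum_range_succ (fun k => y ((π⁻¹ ^ k) (π i)) ^ p ^ k) m
    rw [Finset.sum_range_succ'] at h1
    have h2 : y ((π⁻¹ ^ m) (π i)) ^ p ^ m = y ((π⁻¹ ^ 0) (π i)) ^ p ^ 0 := by
      rw [← hL, FiniteField.pow_card, inv_pow, hπ]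
      simp
    rw [h2] at h1
    exact add_right_cancel h1
  funext j
  have hc : ∀ c : L, ∑ k ∈ Finset.range m, lam ((π ^ k) j) * c ^ p ^ k = 0 := by
    intro c
    rw [← h _ (hT (Pi.single j c))]
    simp only [T, Finset.mul_sum]
    rw [Finset.sum_comm]
    apply Finset.sum_congr rfl
    intro k _
    rw [Finset.sum_eq_single ((π ^ k) j)]
    · have : (π⁻¹ ^ k) ((π ^ k) j) = j := by simp
      rw [this]; simp
    · intro i _ hi
      have : (π⁻¹ ^ k) i ≠ j := by
        rintro rfl
        apply hi
        simp
      rw [Pi.single_eq_of_ne this, zero_pow (pow_pos hp.out.pos k).ne', mul_zero]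
    · simp
  let g : L[X] := ∑ k ∈ Finset.range m, C (lam ((π ^ k) j)) * X ^ p ^ k
  have hg0 : g = 0 := by
    apply eq_zero_of_natDegree_lt_card_of_eval_eq_zero g (f := fun c : L => c) Function.injective_id
    · intro c
      simp only [g, eval_finsetSum, eval_mul, eval_C, eval_pow, eval_X]
      exact hc c
    · rw [hL]
      refine lt_of_le_of_lt (natDegree_sum_le_of_forall_le (n := p ^ (m - 1)) _ _ ?_) ?_
      · intro k hk
        refine (natDegree_C_mul_X_pow_le _ _).trans ?_
        have := Finset.mem_range.1 hk
        exact Nat.pow_le_pow_right hp.out.pos (by omega)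
      · exact Nat.pow_lt_pow_right hp.out.one_lt (by omega)
  have h3 : g.coeff 1 = lam j := by
    simp only [g, finsetSum_coeff, coeff_C_mul, coeff_X_pow]
    rw [Finset.sum_eq_single 0]
    · simp
    · intro k _ hk
      rw [if_neg, mul_zero]
      have := Nat.one_lt_pow hk hp.out.one_lt
      omega
    · intro h; simp at h; omega
  rw [← h3, hg0]; simp

theorem gsV_finrank (p : ℕ) [hp : Fact p.Prime] (L : Type) [Field L] [Algebra (ZMod p) L] [Fintype L] (n m : ℕ)
    (π : Equiv.Perm (Fin n)) (hm : 0 < m) (hπ : π ^ m = 1) (hL : Fintype.card L = p ^ m) :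
    n ≤ Module.finrank (ZMod p) (gsV p L n π) := by
  have htop : Submodule.span L (gsV p L n π : Set (Fin n → L)) = ⊤ := by
    by_contra hne
    obtain ⟨φ, hφ0, hφ⟩ := Submodule.exists_le_ker_of_lt_top _ (lt_top_iff_ne_top.2 hne)
    apply hφ0
    have h1 : ∀ x, φ x = ∑ i, φ (Pi.single i 1) * x i := by
      intro x
      rw [LinearMap.pi_apply_eq_sum_univ φ x]
      apply Finset.sum_congr rfl
      intro i _
      rw [smul_eq_mul, mul_comm]
      congr 2
      ext j
      simp [Pi.single_apply, eq_comm]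
    have h2 := gsV_dual p L n m π hm hπ hL (fun i => φ (Pi.single i 1)) (by
      intro x hx
      rw [← h1]
      exact hφ (Submodule.subset_span hx))
    ext x
    have := congrFun h2 x
    simpa using this
  let b := Module.finBasis (ZMod p) (gsV p L n π)
  have hspan : Submodule.span L (Set.range fun i => (b i : Fin n → L)) = ⊤ := by
    rw [eq_top_iff, ← htop, Submodule.span_le]
    intro x hx
    have h1 := b.sum_repr ⟨x, hx⟩
    have h2 := congrArg Subtype.val h1
    simp only [Submodule.coe_sum, Submodule.coe_smul] at h2
    rw [← h2]
    apply Submodule.sum_mem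
    intro i _
    rw [← algebraMap_smul L]
    exact Submodule.smul_mem _ _ (Submodule.subset_span ⟨i, rfl⟩)
  have h3 := finrank_range_le_card (R := L) (fun i => (b i : Fin n → L))
  rw [Set.finrank, hspan, finrank_top] at h3
  simpa using h3

theorem gs_card_inj (p : ℕ) [hp : Fact p.Prime] (L : Type) [Field L] [Algebra (ZMod p) L] [Fintype L] (n m : ℕ)
    (π : Equiv.Perm (Fin n)) (hm : 0 < m) (hπ : π ^ m = 1) (hL : Fintype.card L = p ^ m)
    (hpn : 2 * n ^ 2 ≤ p) :
    ∃ U : Finset (Fin n → L), (∀ x ∈ U, Function.Injective x ∧ ∀ i, x i ^ p = x (π i)) ∧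
      p ^ n ≤ 2 * U.card := by
  classical
  let V := gsV p L n π
  let d := Module.finrank (ZMod p) V
  have hd : n ≤ d := gsV_finrank p L n m π hm hπ hL
  let VF : Finset (Fin n → L) := Finset.univ.filter (fun x => x ∈ V)
  have hVF : VF.card = p ^ d := by
    have h1 : Fintype.card V = p ^ d := by
      rw [Module.card_eq_pow_finrank (K := ZMod p), ZMod.card]
    rw [← h1, Fintype.card_subtype]
  let E : Fin n × Fin n → Finset (Fin n → L) := fun ij => VF.filter (fun x => x ij.1 = x ij.2)
  have hE : ∀ ij : Fin n × Fin n, ij.1 ≠ ij.2 → (E ij).card * p ≤ p ^ d := by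
    rintro ⟨i, j⟩ hij
    let φ : (Fin n → L) →ₗ[ZMod p] L := LinearMap.proj (R := ZMod p) (φ := fun _ : Fin n => L) i -
      LinearMap.proj (R := ZMod p) (φ := fun _ : Fin n => L) j
    let V' := V ⊓ LinearMap.ker φ
    have hlt : V' < V := by
      refine lt_of_le_of_ne inf_le_left ?_
      intro heq
      have h1 := gsV_dual p L n m π hm hπ hL (Pi.single i 1 - Pi.single j 1) (by
        intro x hx
        have hx' : x ∈ V' := by rw [heq]; exact hx
        have : x i - x j = 0 := (Submodule.mem_inf.1 hx').2
        simp [sub_mul, Finset.sum_sub_distrib, Pi.single_apply, this])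
      have h2 := congrFun h1 i
      have hij' : i ≠ j := hij
      simp [hij'] at h2
    have hfr : Module.finrank (ZMod p) V' < d := Submodule.finrank_lt_finrank_of_lt hlt
    have hc : (E (i, j)).card = p ^ Module.finrank (ZMod p) V' := by
      have h1 : Fintype.card V' = p ^ Module.finrank (ZMod p) V' := by
        rw [Module.card_eq_pow_finrank (K := ZMod p), ZMod.card]
      rw [← h1, Fintype.card_subtype]
      congr 1
      ext x
      simp only [E, VF, Finset.mem_filter, Finset.mem_univ, true_and, V', Submodule.mem_inf,
        LinearMap.mem_ker, φ]
      simp [sub_eq_zero]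
    rw [hc, ← pow_succ]
    exact Nat.pow_le_pow_right hp.out.pos hfr
  let U := VF.filter Function.Injective
  refine ⟨U, ?_, ?_⟩
  · intro x hx
    simp only [U, VF, Finset.mem_filter, Finset.mem_univ, true_and] at hx
    exact ⟨hx.2, hx.1⟩
  · have hcover : VF ⊆ U ∪ ((Finset.univ : Finset (Fin n × Fin n)).filter (fun ij => ij.1 ≠ ij.2)).biUnion E := by
      intro x hx
      by_cases hi : Function.Injective x
      · exact Finset.mem_union_left _ (Finset.mem_filter.2 ⟨hx, hi⟩)
      · apply Finset.mem_union_right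
        simp only [Function.Injective] at hi
        push Not at hi
        obtain ⟨i, j, hij, hne⟩ := hi
        rw [Finset.mem_biUnion]
        exact ⟨(i, j), by simpa using hne, Finset.mem_filter.2 ⟨hx, hij⟩⟩
    have h1 := (Finset.card_le_card hcover).trans (Finset.card_union_le _ _)
    have h2 : (((Finset.univ : Finset (Fin n × Fin n)).filter (fun ij => ij.1 ≠ ij.2)).biUnion E).card * p
        ≤ n ^ 2 * p ^ d := by
      calc _ ≤ (∑ ij ∈ (Finset.univ : Finset (Fin n × Fin n)).filter (fun ij => ij.1 ≠ ij.2), (E ij).card) * p := by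
            gcongr; exact Finset.card_biUnion_le
        _ = ∑ ij ∈ (Finset.univ : Finset (Fin n × Fin n)).filter (fun ij => ij.1 ≠ ij.2), (E ij).card * p := by
            rw [Finset.sum_mul]
        _ ≤ ∑ ij ∈ (Finset.univ : Finset (Fin n × Fin n)).filter (fun ij => ij.1 ≠ ij.2), p ^ d :=
            Finset.sum_le_sum fun ij h => hE ij (Finset.mem_filter.1 h).2
        _ ≤ n ^ 2 * p ^ d := by
            rw [Finset.sum_const, smul_eq_mul]
            gcongr
            refine (Finset.card_filter_le _ _).trans ?_
            simp [sq]
    set B := (((Finset.univ : Finset (Fin n × Fin n)).filter (fun ij => ij.1 ≠ ij.2)).biUnion E).card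
    have h3 : 2 * B ≤ p ^ d := by
      have h4 : p * (2 * B) ≤ p * p ^ d := by
        calc p * (2 * B) = 2 * (B * p) := by ring
          _ ≤ 2 * (n ^ 2 * p ^ d) := by gcongr
          _ = (2 * n ^ 2) * p ^ d := by ring
          _ ≤ _ := by gcongr
      exact Nat.le_of_mul_le_mul_left h4 hp.out.pos
    have h5 : p ^ n ≤ p ^ d := Nat.pow_le_pow_right hp.out.pos hd
    omega

theorem gs_lift (p : ℕ) [hp : Fact p.Prime] (L : Type) [Field L] [Algebra (ZMod p) L] (n : ℕ)
    (π : Equiv.Perm (Fin n)) (x : Fin n → L) (hx : ∀ i, x i ^ p = x (π i)) :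
    ∃ b : Fin n → ZMod p, (gsP n b).map (algebraMap (ZMod p) L) = ∏ i, (X - C (x i)) := by
  have : CharP L p := charP_of_injective_algebraMap (algebraMap (ZMod p) L).injective p
  set g : L[X] := ∏ i, (X - C (x i)) with hg
  have hmon : g.Monic := monic_prod_of_monic _ _ fun i _ => monic_X_sub_C _
  have hdeg : g.natDegree = n := by
    rw [hg, natDegree_prod_of_monic _ _ fun i _ => monic_X_sub_C _]
    simp
  have hfix : g.map (frobenius L p) = g := by
    rw [hg, Polynomial.map_prod]
    simp only [Polynomial.map_sub, map_X, map_C, frobenius_def, hx]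
    exact Equiv.prod_comp π (fun i => X - C (x i))
  have hc : ∀ k, ∃ c : ZMod p, algebraMap (ZMod p) L c = g.coeff k := by
    intro k
    have h1 : g.coeff k ^ p = g.coeff k := by
      conv_rhs => rw [← hfix, coeff_map, frobenius_def]
    have h2 := (Subfield.mem_bot_iff_pow_eq_self L p).2 h1
    have h3 : (⊥ : Subfield L) ≤ (algebraMap (ZMod p) L).fieldRange := bot_le
    exact h3 h2
  choose c hc using hc
  refine ⟨fun i => c (n - 1 - i), ?_⟩
  rw [gsP_map]
  simp only [hc]
  exact gsP_of_monic n g hmon hdeg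

theorem gs_count (n : ℕ) (π : Equiv.Perm (Fin n)) (p : ℕ) [hp : Fact p.Prime] (hpn : 2 * n ^ 2 ≤ p) :
    ∃ Ω : Finset (Fin n → ZMod p), p ^ n ≤ 2 * n ^ n * Ω.card ∧
      ∀ b ∈ Ω, ∃ x : Fin n → AlgebraicClosure (ZMod p), Function.Injective x ∧
        (∀ i, x i ^ p = x (π i)) ∧
        (gsP n b).map (algebraMap (ZMod p) (AlgebraicClosure (ZMod p))) = ∏ i, (X - C (x i)) := by
  classical
  let m := orderOf π
  have hm : 0 < m := orderOf_pos π
  let L := GaloisField p m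
  let : Fintype L := Fintype.ofFinite L
  have hL : Fintype.card L = p ^ m := by
    rw [← Nat.card_eq_fintype_card]; exact GaloisField.card p m hm.ne'
  obtain ⟨U, hU, hUc⟩ := gs_card_inj p L n m π hm (pow_orderOf_eq_one π) hL hpn
  have hex : ∀ x : Fin n → L, ∃ b : Fin n → ZMod p, x ∈ U →
      (gsP n b).map (algebraMap (ZMod p) L) = ∏ i, (X - C (x i)) := by
    intro x
    by_cases hx : x ∈ U
    · obtain ⟨b, hb⟩ := gs_lift p L n π x (hU x hx).2
      exact ⟨b, fun _ => hb⟩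
    · exact ⟨0, fun h => absurd h hx⟩
  choose F hF using hex
  let ι : L →ₐ[ZMod p] AlgebraicClosure (ZMod p) := IsAlgClosed.lift
  refine ⟨U.image F, ?_, ?_⟩
  · have h1 : U.card ≤ n ^ n * (U.image F).card := by
      apply Finset.card_le_mul_card_image
      intro b _
      let R : Finset L := ((gsP n b).map (algebraMap (ZMod p) L)).roots.toFinset
      have hR : R.card ≤ n := by
        refine (Multiset.toFinset_card_le _).trans ((card_roots' _).trans ?_)
        rw [(gsP_deg n b).1.natDegree_map, (gsP_deg n b).2]
      have hsub : U.filter (fun x => F x = b) ⊆ Fintype.piFinset fun _ : Fin n => R := by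
        intro x hx
        obtain ⟨hxU, rfl⟩ := Finset.mem_filter.1 hx
        rw [Fintype.mem_piFinset]
        intro i
        rw [Multiset.mem_toFinset, mem_roots ((gsP_deg n _).1.map _).ne_zero, IsRoot, hF x hxU,
          gs_root_iff]
        exact ⟨i, rfl⟩
      refine (Finset.card_le_card hsub).trans ?_
      rw [Fintype.card_piFinset, Finset.prod_const, Finset.card_univ, Fintype.card_fin]
      gcongr
    calc p ^ n ≤ 2 * U.card := hUc
      _ ≤ 2 * (n ^ n * (U.image F).card) := by gcongr
      _ = _ := by ring
  · intro b hb
    obtain ⟨x, hx, rfl⟩ := Finset.mem_image.1 hb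
    refine ⟨fun i => ι (x i), ι.injective.comp (hU x hx).1, ?_, ?_⟩
    · intro i
      change ι (x i) ^ p = ι (x (π i))
      rw [← (hU x hx).2 i, map_pow]
    · rw [← ι.comp_algebraMap, ← map_map, hF x hx, Polynomial.map_prod]
      simp

/-- Integer vectors in the box whose polynomial is not of type `π`. -/
noncomputable def gsS (n h : ℕ) (π : Equiv.Perm (Fin n)) : Finset (Fin n → ℤ) :=
  open Classical in
  (Fintype.piFinset fun _ : Fin n => Finset.Icc (-(h : ℤ)) h).filter (fun a =>
    ¬ gsHasType n ((gsP n a).map (Int.castRingHom ℚ))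
      ((gsP n a).map (Int.castRingHom ℚ)).SplittingField π)

/-- The sieving primes. -/
def gsPr (n Q : ℕ) : Finset ℕ := (Finset.Icc (2 * n ^ 2) Q).filter Nat.Prime

theorem gs_dedekind_aux (n : ℕ) (a : Fin n → ℤ) (K : Type) [Field K] [A : Algebra ℚ K]
    [hA : IsSplittingField ℚ K ((gsP n a).map (Int.castRingHom ℚ))]
    (p : ℕ) [hp : Fact p.Prime] (π : Equiv.Perm (Fin n))
    (x : Fin n → AlgebraicClosure (ZMod p)) (hx : Function.Injective x)
    (hxp : ∀ i, x i ^ p = x (π i))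
    (hfx : (gsP n (fun i => (a i : ZMod p))).map (algebraMap (ZMod p) (AlgebraicClosure (ZMod p)))
      = ∏ i, (X - C (x i))) :
    gsHasType n ((gsP n a).map (Int.castRingHom ℚ)) K π := by
  have hc : CharZero K := algebraRat.charZero _
  obtain rfl : A = DivisionRing.toRatAlgebra := Subsingleton.elim _ _
  have : FiniteDimensional ℚ K :=
    IsSplittingField.finiteDimensional K ((gsP n a).map (Int.castRingHom ℚ))
  have : NumberField K := { }
  have : Normal ℚ K := Normal.of_isSplittingField ((gsP n a).map (Int.castRingHom ℚ))
  have : IsGalois ℚ K := { }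
  apply gs_dedekind n (gsP n a) (gsP_deg n a).1 (gsP_deg n a).2 K _ p π x hx hxp
  · rw [← hfx, gsP_map, gsP_map]
    simp
  · have h := IsSplittingField.splits K ((gsP n a).map (Int.castRingHom ℚ))
    rwa [map_map, RingHom.ext_int ((algebraMap ℚ K).comp (Int.castRingHom ℚ))
      (algebraMap ℤ K)] at h

theorem gs_dedekind' (n : ℕ) (a : Fin n → ℤ) (p : ℕ) [hp : Fact p.Prime] (π : Equiv.Perm (Fin n))
    (x : Fin n → AlgebraicClosure (ZMod p)) (hx : Function.Injective x)
    (hxp : ∀ i, x i ^ p = x (π i))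
    (hfx : (gsP n (fun i => (a i : ZMod p))).map (algebraMap (ZMod p) (AlgebraicClosure (ZMod p)))
      = ∏ i, (X - C (x i))) :
    gsHasType n ((gsP n a).map (Int.castRingHom ℚ))
      ((gsP n a).map (Int.castRingHom ℚ)).SplittingField π :=
  gs_dedekind_aux n a _ (hA := IsSplittingField.splittingField _) p π x hx hxp hfx

theorem gs_bound_type (n h Q : ℕ) (π : Equiv.Perm (Fin n)) (hn : 0 < n) (hQ : 12 * h ≤ Q ^ 2) :
    ((gsS n h π).card : ℝ) * (1 / (2 * (n : ℝ) ^ n)) ^ 2 * (gsPr n Q).card ≤ (4 * (Q : ℝ) ^ 2) ^ n := by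
  classical
  have hex : ∀ p : ℕ, ∃ Ω : Finset (Fin n → ZMod p), p ∈ gsPr n Q → (p ^ n ≤ 2 * n ^ n * Ω.card ∧
      ∀ a : Fin n → ℤ, (fun i => (a i : ZMod p)) ∈ Ω → a ∉ gsS n h π) := by
    intro p
    by_cases hp : p ∈ gsPr n Q
    · obtain ⟨h1, h2⟩ := Finset.mem_filter.1 hp
      have : Fact p.Prime := ⟨h2⟩
      obtain ⟨Ω, hΩ, hb⟩ := gs_count n π p (Finset.mem_Icc.1 h1).1
      refine ⟨Ω, fun _ => ⟨hΩ, ?_⟩⟩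
      intro a ha haS
      obtain ⟨x, hx, hxp, hfx⟩ := hb _ ha
      exact (Finset.mem_filter.1 haS).2 (gs_dedekind' n a p π x hx hxp hfx)
    · exact ⟨∅, fun h => absurd h hp⟩
  choose Ω hΩ using hex
  let sh : (Fin n → ℤ) → (Fin n → ℕ) := fun a i => (a i + h).toNat
  have hbox : ∀ a ∈ gsS n h π, ∀ i, -(h : ℤ) ≤ a i ∧ a i ≤ h := by
    intro a ha i
    have := Fintype.mem_piFinset.1 (Finset.mem_filter.1 ha).1 i
    exact Finset.mem_Icc.1 this
  have hinj : Set.InjOn sh (gsS n h π) := by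
    intro a ha b hb hab
    funext i
    have h1 := congrFun hab i
    have h2 := hbox a ha i
    have h3 := hbox b hb i
    simp only [sh] at h1
    omega
  have hcast : ∀ a ∈ gsS n h π, ∀ (p : ℕ) (i : Fin n), ((sh a i : ℕ) : ZMod p) = (a i : ZMod p) + h := by
    intro a ha p i
    have h2 := hbox a ha i
    have h3 : ((sh a i : ℕ) : ℤ) = a i + h := Int.toNat_of_nonneg (by omega)
    have h4 := congrArg (Int.cast : ℤ → ZMod p) h3
    push_cast at h4
    exact h4
  have hn' : (0 : ℝ) < n := by exact_mod_cast hn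
  have tinj : ∀ p : ℕ, Function.Injective (fun (b : Fin n → ZMod p) (i : Fin n) => b i + (h : ZMod p)) := by
    intro p b c hbc
    funext i
    exact add_right_cancel (congrFun hbc i)
  have main := gs_sieve n Q (gsPr n Q)
    (fun p hp => ⟨(Finset.mem_filter.1 hp).2, (Finset.mem_Icc.1 (Finset.mem_filter.1 hp).1).2⟩)
    (1 / (2 * (n : ℝ) ^ n)) (by positivity)
    (fun p => (Ω p).image (fun b i => b i + (h : ZMod p)))
    (by
      intro p hp
      rw [Finset.card_image_of_injective _ (tinj p)]
      have h1 : ((p : ℝ) ^ n) ≤ 2 * (n : ℝ) ^ n * (Ω p).card := by exact_mod_cast (hΩ p hp).1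
      rw [one_div, inv_mul_le_iff₀ (by positivity)]
      exact h1)
    ((gsS n h π).image sh)
    (by
      intro a ha i
      obtain ⟨b, hb, rfl⟩ := Finset.mem_image.1 ha
      have h2 := hbox b hb i
      simp only [sh]
      omega)
    (by
      intro a ha p hp hmem
      obtain ⟨b, hb, rfl⟩ := Finset.mem_image.1 ha
      obtain ⟨c, hc, hce⟩ := Finset.mem_image.1 hmem
      apply (hΩ p hp).2 b _ hb
      have : c = fun i => (b i : ZMod p) := by
        apply tinj p
        refine hce.trans ?_
        funext i
        exact hcast b hb p i
      rwa [← this])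
  rwa [Finset.card_image_of_injOn hinj] at main

theorem gs_primes (n : ℕ) (ε : ℝ) (hε : 0 < ε) :
    ∃ Q0 : ℕ, ∀ Q : ℕ, Q0 ≤ Q → (Q : ℝ) ^ (1 - ε) ≤ (gsPr n Q).card := by
  have h1 : ∀ᶠ x : ℝ in Filter.atTop, ‖Real.log x‖ ≤ (1 / 8) * ‖x ^ ε‖ :=
    (isLittleO_log_rpow_atTop hε).bound (by norm_num)
  have h2 : ∀ᶠ x : ℝ in Filter.atTop, ‖Real.log x‖ ≤ (1 / (8 * (2 * n ^ 2 + 1))) * ‖x ^ (1 : ℝ)‖ :=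
    (isLittleO_log_rpow_atTop one_pos).bound (by positivity)
  have h3 := ((h1.and h2).and (Filter.eventually_ge_atTop 16))
  have h4 := (tendsto_natCast_atTop_atTop (R := ℝ)).eventually h3
  obtain ⟨Q0, hQ0⟩ := Filter.eventually_atTop.1 h4
  refine ⟨Q0, fun Q hQ => ?_⟩
  obtain ⟨⟨a1, a2⟩, a3⟩ := hQ0 Q hQ
  have hQpos : (0 : ℝ) < Q := by linarith
  have hlog : 0 < Real.log Q := Real.log_pos (by linarith)
  rw [Real.norm_of_nonneg hlog.le, Real.norm_of_nonneg (by positivity)] at a1 a2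
  rw [Real.rpow_one] at a2
  have b1 : (Q : ℝ) ^ (1 - ε) * Real.log Q ≤ Q / 8 := by
    calc (Q : ℝ) ^ (1 - ε) * Real.log Q ≤ (Q : ℝ) ^ (1 - ε) * (1 / 8 * (Q : ℝ) ^ ε) := by gcongr
      _ = ((Q : ℝ) ^ (1 - ε) * (Q : ℝ) ^ ε) / 8 := by ring
      _ = Q / 8 := by rw [← Real.rpow_add hQpos]; simp
  have b2 : (2 * (n : ℝ) ^ 2 + 1) * Real.log Q ≤ (Q : ℝ) / 8 := by
    calc (2 * (n : ℝ) ^ 2 + 1) * Real.log Q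
        ≤ (2 * (n : ℝ) ^ 2 + 1) * (1 / (8 * (2 * (n : ℝ) ^ 2 + 1)) * (Q : ℝ)) := by gcongr
      _ = (Q : ℝ) / 8 := by field_simp
  have b3 : Real.log (Q + 1) ≤ Real.log 2 + Real.log Q := by
    rw [← Real.log_mul (by norm_num) hQpos.ne']
    exact Real.log_le_log (by positivity) (by linarith)
  have b4 := Chebyshev.pi_ge Q
  rw [div_le_iff₀ hlog] at b4
  have b5 : (Nat.primeCounting Q : ℝ) ≤ (gsPr n Q).card + 2 * n ^ 2 := by
    have : Nat.primeCounting Q ≤ (gsPr n Q).card + 2 * n ^ 2 := by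
      rw [Nat.primeCounting, Nat.primeCounting', Nat.count_eq_card_filter_range]
      calc _ ≤ (gsPr n Q ∪ Finset.range (2 * n ^ 2)).card := by
            apply Finset.card_le_card
            intro p hp
            obtain ⟨hp1, hp2⟩ := Finset.mem_filter.1 hp
            rw [Finset.mem_range] at hp1
            rw [Finset.mem_union, Finset.mem_range, gsPr, Finset.mem_filter, Finset.mem_Icc]
            by_cases hlt : p < 2 * n ^ 2
            · exact Or.inr hlt
            · exact Or.inl ⟨⟨by omega, by omega⟩, hp2⟩
        _ ≤ _ := (Finset.card_union_le _ _).trans (by simp)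
    exact_mod_cast this
  have l2 := Real.log_two_gt_d9
  have l2' := Real.log_two_lt_d9
  have : ((Q : ℝ) ^ (1 - ε)) * Real.log Q ≤ (gsPr n Q).card * Real.log Q := by
    have b6 : (Nat.primeCounting Q : ℝ) * Real.log Q ≤ ((gsPr n Q).card + 2 * n ^ 2) * Real.log Q := by
      gcongr
    nlinarith
  exact le_of_mul_le_mul_right this hlog

theorem gs_single (n : ℕ) (hn : 2 ≤ n) (ε : ℝ) (hε : 0 < ε) :
    ∃ C : ℝ, ∀ H : ℝ, 1 ≤ H → ∀ π : Equiv.Perm (Fin n),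
      ((gsS n ⌊H⌋₊ π).card : ℝ) ≤ C * H ^ ((n : ℝ) - 1 / 2 + ε) := by
  obtain ⟨Q0, hQ0⟩ := gs_primes n ε hε
  have hn' : (2 : ℝ) ≤ n := by exact_mod_cast hn
  set D : ℝ := (2 * (n : ℝ) ^ n) ^ 2 with hD
  have hDpos : 0 < D := by positivity
  refine ⟨D * 4 ^ n * 7 ^ (2 * (n : ℝ) - 1 + ε) + (2 * (Q0 : ℝ) ^ 2 + 1) ^ n, fun H hH π => ?_⟩
  have hHpos : 0 < H := by linarith
  set h := ⌊H⌋₊ with hh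
  have h1 : (h : ℝ) ≤ H := Nat.floor_le hHpos.le
  have hge : (1 : ℝ) ≤ H ^ ((n : ℝ) - 1 / 2 + ε) := Real.one_le_rpow hH (by linarith)
  set Q := Nat.sqrt (12 * h) + 1 with hQdef
  have hQ1 : 12 * h ≤ Q ^ 2 := by
    have := Nat.lt_succ_sqrt (12 * h)
    rw [hQdef, pow_two]
    exact this.le
  have hhpos : 1 ≤ h := Nat.le_floor (by simpa using hH)
  have hQ2 : Q ^ 2 ≤ 48 * h := by
    have h3 := Nat.sqrt_le (12 * h)
    have h4 : 1 ≤ Nat.sqrt (12 * h) := Nat.le_sqrt.2 (by omega)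
    rw [hQdef]
    nlinarith
  have hQpos : (0 : ℝ) < Q := by rw [hQdef]; positivity
  by_cases hc : Q0 ≤ Q
  · have h5 := gs_bound_type n h Q π (by omega) hQ1
    have h6 := hQ0 Q hc
    have hQH : (Q : ℝ) ≤ 7 * H ^ (1 / 2 : ℝ) := by
      have h7 : ((Q : ℝ)) ^ 2 ≤ 48 * h := by exact_mod_cast hQ2
      have h8 : (H ^ (1 / 2 : ℝ)) ^ 2 = H := by
        rw [← Real.rpow_natCast, ← Real.rpow_mul hHpos.le]; norm_num
      apply le_of_sq_le_sq _ (by positivity)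
      rw [mul_pow, h8]
      linarith
    have h9 : ((gsS n h π).card : ℝ) ≤ D * 4 ^ n * (Q : ℝ) ^ (2 * (n : ℝ) - 1 + ε) := by
      have e1 : ((gsS n h π).card : ℝ) * (1 / (2 * (n : ℝ) ^ n)) ^ 2 * (Q : ℝ) ^ (1 - ε)
          ≤ (4 * (Q : ℝ) ^ 2) ^ n := le_trans (by gcongr) h5
      have e2 : (1 / (2 * (n : ℝ) ^ n)) ^ 2 = D⁻¹ := by rw [hD, one_div, inv_pow]
      have e3 : (4 * (Q : ℝ) ^ 2) ^ n = 4 ^ n * (Q : ℝ) ^ (2 * (n : ℝ) - 1 + ε) * (Q : ℝ) ^ (1 - ε) := by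
        rw [mul_assoc, ← Real.rpow_add hQpos, mul_pow, ← pow_mul]
        congr 1
        rw [← Real.rpow_natCast]
        congr 1
        push_cast
        ring
      rw [e2, e3] at e1
      have e4 := le_of_mul_le_mul_right e1 (Real.rpow_pos_of_pos hQpos _)
      rw [← div_eq_mul_inv, div_le_iff₀ hDpos] at e4
      linarith
    have h10 : (Q : ℝ) ^ (2 * (n : ℝ) - 1 + ε) ≤ 7 ^ (2 * (n : ℝ) - 1 + ε) * H ^ ((n : ℝ) - 1 / 2 + ε) := by
      calc (Q : ℝ) ^ (2 * (n : ℝ) - 1 + ε) ≤ (7 * H ^ (1 / 2 : ℝ)) ^ (2 * (n : ℝ) - 1 + ε) :=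
            Real.rpow_le_rpow hQpos.le hQH (by linarith)
        _ = 7 ^ (2 * (n : ℝ) - 1 + ε) * H ^ ((1 / 2 : ℝ) * (2 * (n : ℝ) - 1 + ε)) := by
            rw [Real.mul_rpow (by norm_num) (by positivity), ← Real.rpow_mul hHpos.le]
        _ ≤ _ := by
            gcongr
            linarith
    calc ((gsS n h π).card : ℝ) ≤ D * 4 ^ n * (Q : ℝ) ^ (2 * (n : ℝ) - 1 + ε) := h9
      _ ≤ D * 4 ^ n * (7 ^ (2 * (n : ℝ) - 1 + ε) * H ^ ((n : ℝ) - 1 / 2 + ε)) := by gcongr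
      _ = (D * 4 ^ n * 7 ^ (2 * (n : ℝ) - 1 + ε)) * H ^ ((n : ℝ) - 1 / 2 + ε) := by ring
      _ ≤ _ := by
          apply mul_le_mul_of_nonneg_right _ (by positivity)
          have : (0 : ℝ) ≤ (2 * (Q0 : ℝ) ^ 2 + 1) ^ n := by positivity
          linarith
  · have h5 : h ≤ Q0 ^ 2 := by
      have : Q ^ 2 ≤ Q0 ^ 2 := Nat.pow_le_pow_left (by omega) 2
      omega
    have h6 : (gsS n h π).card ≤ (2 * Q0 ^ 2 + 1) ^ n := by
      classical
      calc (gsS n h π).card ≤ (Fintype.piFinset fun _ : Fin n => Finset.Icc (-(h : ℤ)) h).card :=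
            Finset.card_le_card (Finset.filter_subset _ _)
        _ = (2 * h + 1) ^ n := by
            rw [Fintype.card_piFinset]
            simp only [Int.card_Icc, Finset.prod_const, Finset.card_univ, Fintype.card_fin]
            congr 1
            omega
        _ ≤ _ := Nat.pow_le_pow_left (by omega) n
    have h7 : ((gsS n h π).card : ℝ) ≤ (2 * (Q0 : ℝ) ^ 2 + 1) ^ n := by exact_mod_cast h6
    have h8 : (0 : ℝ) ≤ D * 4 ^ n * 7 ^ (2 * (n : ℝ) - 1 + ε) := by positivity
    have h9 : (0 : ℝ) ≤ (2 * (Q0 : ℝ) ^ 2 + 1) ^ n := by positivity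
    nlinarith

/-- (Gallagher) For `n ≥ 2`, there are at most `O_{n,ε}(H^(n-1/2+ε))` monic integer polynomials
of degree `n` and height at most `H` whose splitting field over `ℚ` has Galois group not
isomorphic to the full symmetric group `Sₙ`. -/
theorem count_polynomials_not_symmetric (n : ℕ) (hn : 2 ≤ n) (ε : ℝ) (hε : 0 < ε) :
    ∃ C : ℝ, ∀ H : ℝ, 1 ≤ H →
      (Set.ncard {a : Fin n → ℤ |
          (∀ i, (|a i| : ℝ) ≤ H) ∧
          ¬ Nonempty ((X ^ n + ∑ i : Fin n, Polynomial.C ((a i : ℚ)) * X ^ (n - 1 - (i : ℕ)) :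
              Polynomial ℚ).Gal ≃* Equiv.Perm (Fin n))} : ℝ)
        ≤ C * H ^ ((n : ℝ) - 1 / 2 + ε) := by
  classical
  obtain ⟨C, hC⟩ := gs_single n hn ε hε
  refine ⟨(Fintype.card (Equiv.Perm (Fin n)) : ℝ) * C, fun H hH => ?_⟩
  have hsub : {a : Fin n → ℤ |
          (∀ i, (|a i| : ℝ) ≤ H) ∧
          ¬ Nonempty ((X ^ n + ∑ i : Fin n, Polynomial.C ((a i : ℚ)) * X ^ (n - 1 - (i : ℕ)) :
              Polynomial ℚ).Gal ≃* Equiv.Perm (Fin n))} ⊆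
      ((Finset.univ.biUnion (fun π : Equiv.Perm (Fin n) => gsS n ⌊H⌋₊ π) : Finset (Fin n → ℤ)) :
        Set (Fin n → ℤ)) := by
    rintro a ⟨ha1, ha2⟩
    have hP : (X ^ n + ∑ i : Fin n, Polynomial.C ((a i : ℚ)) * X ^ (n - 1 - (i : ℕ)) :
        Polynomial ℚ) = (gsP n a).map (Int.castRingHom ℚ) := by
      rw [gsP_map]
      rfl
    rw [hP] at ha2
    have hex : ∃ π, ¬ gsHasType n ((gsP n a).map (Int.castRingHom ℚ))
        ((gsP n a).map (Int.castRingHom ℚ)).SplittingField π := by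
      by_contra hcon
      push Not at hcon
      exact ha2 (gs_iso n _ hcon)
    obtain ⟨π, hπ⟩ := hex
    rw [Finset.mem_coe, Finset.mem_biUnion]
    refine ⟨π, Finset.mem_univ _, ?_⟩
    rw [gsS, Finset.mem_filter]
    refine ⟨?_, hπ⟩
    rw [Fintype.mem_piFinset]
    intro i
    have h1 : (((a i).natAbs : ℕ) : ℝ) ≤ H := by
      rw [Nat.cast_natAbs]
      push_cast
      exact ha1 i
    have h2 := Nat.le_floor h1
    rw [Finset.mem_Icc]
    omega
  have h1 := Set.ncard_le_ncard hsub (Finset.finite_toSet _)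
  rw [Set.ncard_coe_finset] at h1
  have h2 := h1.trans Finset.card_biUnion_le
  calc _ ≤ ((∑ π : Equiv.Perm (Fin n), (gsS n ⌊H⌋₊ π).card : ℕ) : ℝ) := by exact_mod_cast h2
    _ = ∑ π : Equiv.Perm (Fin n), ((gsS n ⌊H⌋₊ π).card : ℝ) := by push_cast; rfl
    _ ≤ ∑ _π : Equiv.Perm (Fin n), C * H ^ ((n : ℝ) - 1 / 2 + ε) :=
        Finset.sum_le_sum fun π _ => hC H hH π
    _ = _ := by
        rw [Finset.sum_const, Finset.card_univ, nsmul_eq_mul]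
        ring
end
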